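/- Let n ≥ 1 be an integer, θ ∈ (0, π/2), 1 ≤ k ≤ n, and let φ : C_θ → (0,∞) be continuous. There exists a constant C > 0 (depending only on n, k, θ and φ) such that: for every smooth capillary function s on C_θ with τ[s] > 0 satisfying ∫_{C_θ} s(ζ) ζ_i dσ(ζ) = 0 for all i = 1,…,n and σ_k(τ[s])(ζ) = φ(ζ) for all ζ ∈ C_θ, one has 0 < s(ζ) ≤ C for all ζ ∈ C_θ. Moreover, in the case k = n there exist constants c, C' > 0 (depending only on n, θ and φ) such that every such s admits a vector w ∈ ℝ^{n+1} with ⟨w, E_{n+1}⟩ = 0 and c ≤ s(ζ) − ⟨ζ, w⟩ ≤ C' for all ζ ∈ C_θ. -/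

import Mathlib

open MeasureTheory Real Set
open scoped RealInnerProductSpace

noncomputable section

abbrev V (n : ℕ) := EuclideanSpace ℝ (Fin (n + 1))

/-- The vertical unit vector `E_{n+1}`. -/
def Etop (n : ℕ) : V n := EuclideanSpace.single (Fin.last n) 1

/-- The spherical cap `S^n_θ`. -/
def sphCap (n : ℕ) (θ : ℝ) : Set (V n) :=
  {u | ‖u‖ = 1 ∧ Real.cos θ ≤ u (Fin.last n)}

/-- The boundary circle `∂S^n_θ`. -/
def sphCapBdry (n : ℕ) (θ : ℝ) : Set (V n) :=
  {u | ‖u‖ = 1 ∧ u (Fin.last n) = Real.cos θ}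

/-- The capillary cap `C_θ`. -/
def capCap (n : ℕ) (θ : ℝ) : Set (V n) :=
  {ζ | 0 ≤ ζ (Fin.last n) ∧ ‖ζ + Real.cos θ • Etop n‖ = 1}

/-- The open cone over `S^n_θ`. -/
def coneCap (n : ℕ) (θ : ℝ) : Set (V n) :=
  {x | ∃ l : ℝ, 0 < l ∧ ∃ u ∈ sphCap n θ, x = l • u}

/-- `G` is a positively 1-homogeneous extension of `g : C_θ → ℝ` which is `C^m` on an
open neighborhood of the cone over `S^n_θ`. -/
def IsHomExt (n : ℕ) (θ : ℝ) (m : ℕ∞) (g G : V n → ℝ) : Prop :=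
  (∃ U : Set (V n), IsOpen U ∧ coneCap n θ ⊆ U ∧ ContDiffOn ℝ m G U) ∧
  (∀ l : ℝ, 0 < l → ∀ u ∈ sphCap n θ, G (l • u) = l * G u) ∧
  (∀ ζ ∈ capCap n θ, G (ζ + Real.cos θ • Etop n) = g ζ)

/-- The Hessian of `G` at `u` as a quadratic/bilinear form. -/
def hessQ (n : ℕ) (G : V n → ℝ) (u v w : V n) : ℝ :=
  fderiv ℝ (fderiv ℝ G) u v w

/-- The Hessian matrix `D²G(u)` in the standard coordinates. -/
def hessM (n : ℕ) (G : V n → ℝ) (u : V n) : Matrix (Fin (n + 1)) (Fin (n + 1)) ℝ :=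
  fun i j => fderiv ℝ (fderiv ℝ G) u (EuclideanSpace.single i 1) (EuclideanSpace.single j 1)

/-- `σ_j` of the eigenvalues of `D²G(u)` (via characteristic polynomial coefficients). -/
def sigmaElem (n : ℕ) (j : ℕ) (G : V n → ℝ) (u : V n) : ℝ :=
  (-1 : ℝ) ^ j * ((hessM n G u).charpoly.coeff (n + 1 - j))

/-- `τ[g] ≥ 0` : the Hessian of the extension is positive semidefinite on `S^n_θ`. -/
def TauNonneg (n : ℕ) (θ : ℝ) (G : V n → ℝ) : Prop :=
  ∀ u ∈ sphCap n θ, ∀ v : V n, 0 ≤ hessQ n G u v v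

/-- `τ[g] > 0`. -/
def TauPos (n : ℕ) (θ : ℝ) (G : V n → ℝ) : Prop :=
  TauNonneg n θ G ∧
  ∀ u ∈ sphCap n θ, ∀ v : V n, v ≠ 0 → ⟪v, u⟫ = 0 → 0 < hessQ n G u v v

/-- Capillary (Robin) boundary condition: `∂_{n+1}G = 0` on `∂S^n_θ`. -/
def IsCapillaryF (n : ℕ) (θ : ℝ) (G : V n → ℝ) : Prop :=
  ∀ u ∈ sphCapBdry n θ, fderiv ℝ G u (Etop n) = 0

/-- Reflection negating the horizontal coordinates. -/
def horizNeg (n : ℕ) (ζ : V n) : V n := (2 * ζ (Fin.last n)) • Etop n - ζ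

/-- Support function of a set. -/
def suppFn (n : ℕ) (K : Set (V n)) (u : V n) : ℝ := sSup ((fun y => ⟪u, y⟫) '' K)

/-- Relative interior (within the hyperplane `{x_{n+1}=0}`) of the base `K ∩ {x_{n+1}=0}`. -/
def relintBase (n : ℕ) (K : Set (V n)) : Set (V n) :=
  {x | x (Fin.last n) = 0 ∧ ∃ ε > 0, ∀ y : V n, y (Fin.last n) = 0 → ‖y - x‖ < ε → y ∈ K}

/-- A `θ`-capillary convex body. -/
def IsCapBody (n : ℕ) (θ : ℝ) (K : Set (V n)) : Prop :=
  IsCompact K ∧ Convex ℝ K ∧ (interior K).Nonempty ∧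
  (∀ x ∈ K, 0 ≤ x (Fin.last n)) ∧
  (∀ x ∈ K, 0 < x (Fin.last n) → ∀ u : V n, ‖u‖ = 1 → ⟪u, x⟫ = suppFn n K u →
    Real.cos θ ≤ u (Fin.last n)) ∧
  (∀ v : V n, ‖v‖ = 1 → v (Fin.last n) = 0 →
    suppFn n K (Real.sin θ • v + Real.cos θ • Etop n) = Real.sin θ * suppFn n K v) ∧
  (relintBase n K).Nonempty

/-- `ψ` is one of `x²`, `x^p (p<0)`, `-log x`. -/
def PsiOK (ψ : ℝ → ℝ) : Prop :=
  (ψ = fun x : ℝ => x ^ 2) ∨ (∃ p : ℝ, p < 0 ∧ ψ = fun x : ℝ => x ^ p) ∨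
    (ψ = fun x : ℝ => -Real.log x)

/-!
On the slice of the cone over `S^n_θ` at height `cos θ`, the homogeneous extension of `s` becomes a
strictly convex function `f` on the ball of radius `R = sin θ`; Euler's identity turns the capillary
condition into `⟪∇ f z, z⟫ = f z` for `‖z‖ = R`. This Robin condition makes `∇ f` a bijection of
the open ball onto the interior of the Wulff shape `{p | ∀ z, ‖z‖ = R → ⟪p, z⟫ ≤ f z}`, so the
volume of that shape is the integral of `det D²f`.

Positivity: if `f y ≤ 0` for some `‖y‖ = R`, strict convexity shows that `s` strictly increases
under the reflection along `y`, on the half of `C_θ` where `⟪y, ·⟫ > 0`; this contradicts the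
vanishing of the moments.

Upper bound: along a frame chosen greedily, the widths of the Wulff shape are controlled by
`k`-dimensional sections, whose volumes are bounded through `σ_k ≤ max φ`, while perturbing `f` by a
paraboloid turns `σ_k ≥ min φ` into a lower bound for the volume of a thickened Wulff shape.

Lower bound for `k = n`: the Wulff shape has volume bounded below and bounded diameter, so it
contains a ball of controlled radius about its centroid `w`, and `f - ⟪w, ·⟫` is its support
function on the sphere.
-/

open scoped Gradient Pointwise

/-! ### Strictly convex potentials with a Robin boundary condition -/

section Convexity

lemma add_lt_of_deriv_strictMonoOn {g g' : ℝ → ℝ}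
    (hg : ∀ t ∈ Icc (0 : ℝ) 1, HasDerivAt g (g' t) t) (hg' : StrictMonoOn g' (Icc 0 1)) :
    g 0 + g' 0 < g 1 := by
  obtain ⟨c, hc, hslope⟩ := exists_hasDerivAt_eq_slope g g' one_pos
    (fun t ht => (hg t ht).continuousAt.continuousWithinAt)
    (fun t ht => hg t (Ioo_subset_Icc_self ht))
  have hlt := hg' (left_mem_Icc.mpr zero_le_one) (Ioo_subset_Icc_self hc) hc.1
  rw [sub_zero, div_one] at hslope
  linarith

lemma add_fderiv_sub_lt_of_segment {E : Type*} [NormedAddCommGroup E] [NormedSpace ℝ E]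
    {F : E → ℝ} {z w : E} (hF : ∀ x ∈ segment ℝ z w, ContDiffAt ℝ 2 F x)
    (hpos : ∀ x ∈ openSegment ℝ z w, 0 < fderiv ℝ (fderiv ℝ F) x (w - z) (w - z)) :
    F z + fderiv ℝ F z (w - z) < F w := by
  let γ : ℝ → E := AffineMap.lineMap z w
  have hγ (t : ℝ) : HasDerivAt γ (w - z) t := AffineMap.hasDerivAt_lineMap
  have hmem : ∀ t ∈ Icc (0 : ℝ) 1, γ t ∈ segment ℝ z w := fun t ht => by
    rw [segment_eq_image_lineMap]; exact mem_image_of_mem _ ht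
  have hmem' : ∀ t ∈ Ioo (0 : ℝ) 1, γ t ∈ openSegment ℝ z w := fun t ht => by
    rw [openSegment_eq_image_lineMap]; exact mem_image_of_mem _ ht
  have hderiv2 : ∀ t ∈ Icc (0 : ℝ) 1, HasDerivAt (fun t => fderiv ℝ F (γ t) (w - z))
      (fderiv ℝ (fderiv ℝ F) (γ t) (w - z) (w - z)) t := fun t ht => by
    have hd : DifferentiableAt ℝ (fderiv ℝ F) (γ t) :=
      ((hF _ (hmem t ht)).fderiv_right (m := 1) (by norm_num)).differentiableAt (by norm_num)
    simpa using (hd.hasFDerivAt.comp_hasDerivAt t (hγ t)).clm_apply (hasDerivAt_const t (w - z))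
  have hmono : StrictMonoOn (fun t => fderiv ℝ F (γ t) (w - z)) (Icc 0 1) := by
    refine strictMonoOn_of_deriv_pos (convex_Icc 0 1)
      (fun t ht => (hderiv2 t ht).continuousAt.continuousWithinAt) fun t ht => ?_
    rw [interior_Icc] at ht
    rw [(hderiv2 t (Ioo_subset_Icc_self ht)).deriv]
    exact hpos _ (hmem' t ht)
  have := add_lt_of_deriv_strictMonoOn (g := F ∘ γ) (fun t ht =>
    ((hF _ (hmem t ht)).differentiableAt (by norm_num)).hasFDerivAt.comp_hasDerivAt t (hγ t)) hmono
  simpa [γ] using this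

end Convexity

/-- A function on the closed ball of radius `R` about the origin that is strictly convex in the
interior and satisfies the Robin condition `R ∂_ν F = F` on the boundary sphere. It models the
restriction of a capillary support function to a horizontal slice of the cone over the cap. -/
structure IsRobinPotential {E : Type*} [NormedAddCommGroup E] [NormedSpace ℝ E]
    (R : ℝ) (F : E → ℝ) : Prop where
  radius_pos : 0 < R
  contDiffAt : ∀ z, ‖z‖ ≤ R → ContDiffAt ℝ 2 F z
  hess_pos : ∀ z, ‖z‖ < R → ∀ v, v ≠ 0 → 0 < fderiv ℝ (fderiv ℝ F) z v v
  robin : ∀ z, ‖z‖ = R → fderiv ℝ F z z = F z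

lemma exists_smul_eq_of_norm_le {E : Type*} [NormedAddCommGroup E] [NormedSpace ℝ E]
    [Nontrivial E] {R : ℝ} (hR : 0 < R) {z : E} (hz : ‖z‖ ≤ R) :
    ∃ w : E, ‖w‖ = R ∧ ∃ t ∈ Icc (0 : ℝ) 1, t • w = z := by
  rcases eq_or_ne z 0 with rfl | h0
  · obtain ⟨w, hw⟩ := exists_norm_eq E hR.le
    exact ⟨w, hw, 0, by simp, zero_smul _ _⟩
  · have hn : 0 < ‖z‖ := norm_pos_iff.mpr h0
    refine ⟨(R / ‖z‖) • z, ?_, ‖z‖ / R, ⟨by positivity, (div_le_one hR).mpr hz⟩, ?_⟩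
    · rw [norm_smul, norm_of_nonneg (by positivity), div_mul_cancel₀ _ hn.ne']
    · rw [smul_smul, div_mul_div_comm, mul_comm, div_self (by positivity), one_smul]

namespace IsRobinPotential

section Normed

variable {E : Type*} [NormedAddCommGroup E] [NormedSpace ℝ E] {R : ℝ} {F : E → ℝ}

lemma differentiableAt (hF : IsRobinPotential R F) {z : E} (hz : ‖z‖ ≤ R) :
    DifferentiableAt ℝ F z :=
  (hF.contDiffAt z hz).differentiableAt (by norm_num)

lemma differentiableAt_fderiv (hF : IsRobinPotential R F) {z : E} (hz : ‖z‖ ≤ R) :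
    DifferentiableAt ℝ (fderiv ℝ F) z :=
  ((hF.contDiffAt z hz).fderiv_right (m := 1) (by norm_num)).differentiableAt (by norm_num)

lemma norm_zero_le (hF : IsRobinPotential R F) : ‖(0 : E)‖ ≤ R :=
  norm_zero.trans_le hF.radius_pos.le

end Normed

variable {E : Type*} [NormedAddCommGroup E] [InnerProductSpace ℝ E] {R : ℝ} {F : E → ℝ}

lemma add_fderiv_sub_lt (hF : IsRobinPotential R F) {z w : E} (hz : ‖z‖ ≤ R) (hw : ‖w‖ ≤ R)
    (hne : z ≠ w) : F z + fderiv ℝ F z (w - z) < F w := by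
  rw [← mem_closedBall_zero_iff] at hz hw
  refine add_fderiv_sub_lt_of_segment (fun x hx => hF.contDiffAt x ?_)
    fun x hx => hF.hess_pos x ?_ _ (sub_ne_zero.mpr hne.symm)
  · exact mem_closedBall_zero_iff.mp ((convex_closedBall 0 R).segment_subset hz hw hx)
  · have := (strictConvex_closedBall ℝ (0 : E) R).openSegment_subset hz hw hne hx
    rwa [interior_closedBall _ hF.radius_pos.ne', mem_ball_zero_iff] at this

lemma add_fderiv_sub_le (hF : IsRobinPotential R F) {z w : E} (hz : ‖z‖ ≤ R) (hw : ‖w‖ ≤ R) :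
    F z + fderiv ℝ F z (w - z) ≤ F w := by
  rcases eq_or_ne z w with rfl | h
  · simp
  · exact (hF.add_fderiv_sub_lt hz hw h).le

lemma fderiv_le_of_sphere (hF : IsRobinPotential R F) {z w : E} (hz : ‖z‖ = R) (hw : ‖w‖ ≤ R) :
    fderiv ℝ F z w ≤ F w := by
  have := hF.add_fderiv_sub_le hz.le hw
  rw [map_sub, hF.robin z hz] at this
  linarith

lemma smul_lt (hF : IsRobinPotential R F) {w : E} (hw : ‖w‖ = R) {t : ℝ} (ht : t ∈ Ico 0 1) :
    t * F w < F (t • w) := by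
  have hlt : ‖t • w‖ < R := by
    rw [norm_smul, norm_of_nonneg ht.1, hw]
    exact mul_lt_of_lt_one_left hF.radius_pos ht.2
  have h := hF.add_fderiv_sub_lt hw.le hlt.le fun h => hlt.ne (h ▸ hw)
  simp only [map_sub, map_smul, hF.robin w hw, smul_eq_mul] at h
  linarith

lemma smul_le (hF : IsRobinPotential R F) {w : E} (hw : ‖w‖ = R) {t : ℝ} (ht : t ∈ Icc 0 1) :
    t * F w ≤ F (t • w) := by
  rcases ht.2.lt_or_eq with h | rfl
  · exact (hF.smul_lt hw ⟨ht.1, h⟩).le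
  · simp

lemma sub_fderiv_le (hF : IsRobinPotential R F) {z : E} (hz : ‖z‖ ≤ R) :
    F z - fderiv ℝ F z z ≤ F 0 := by
  have := hF.add_fderiv_sub_le hz hF.norm_zero_le
  rw [zero_sub, map_neg] at this
  linarith

lemma two_mul_zero_le (hF : IsRobinPotential R F) {w : E} (hw : ‖w‖ = R) :
    2 * F 0 ≤ F w + F (-w) := by
  have h1 := hF.add_fderiv_sub_le hF.norm_zero_le hw.le
  have h2 := hF.add_fderiv_sub_le hF.norm_zero_le (w := -w) (by rw [norm_neg, hw])
  rw [sub_zero] at h1 h2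
  rw [map_neg] at h2
  linarith

variable [Nontrivial E]

lemma fderiv_self_lt (hF : IsRobinPotential R F) {z : E} (hz : ‖z‖ < R) :
    fderiv ℝ F z z < F z := by
  obtain ⟨w, hw, t, ht, rfl⟩ := exists_smul_eq_of_norm_le hF.radius_pos hz.le
  have ht1 : t < 1 := by
    rwa [norm_smul, norm_of_nonneg ht.1, hw, mul_lt_iff_lt_one_left hF.radius_pos] at hz
  have hchord : F (t • w) + (1 - t) * fderiv ℝ F (t • w) w ≤ F w := by
    have := hF.add_fderiv_sub_le hz.le hw.le
    simp only [map_sub, map_smul, smul_eq_mul] at this ⊢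
    linarith
  have hsmul := hF.smul_lt hw ⟨ht.1, ht1⟩
  rw [map_smul, smul_eq_mul]
  refine lt_of_mul_lt_mul_left ?_ (sub_nonneg.mpr ht1.le)
  linarith [mul_le_mul_of_nonneg_left hchord ht.1]

lemma fderiv_lt_of_sphere (hF : IsRobinPotential R F) {z w : E} (hz : ‖z‖ < R)
    (hw : ‖w‖ = R) : fderiv ℝ F z w < F w := by
  have h1 := hF.add_fderiv_sub_le hz.le hw.le
  have h2 := hF.fderiv_self_lt hz
  rw [map_sub] at h1
  linarith

lemma fderiv_le_of_norm_le (hF : IsRobinPotential R F) {z w : E} (hz : ‖z‖ ≤ R)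
    (hw : ‖w‖ = R) : fderiv ℝ F z w ≤ F w := by
  rcases hz.lt_or_eq with h | h
  · exact (hF.fderiv_lt_of_sphere h hw).le
  · exact hF.fderiv_le_of_sphere h hw.le

lemma zero_pos (hF : IsRobinPotential R F) : 0 < F 0 := by
  simpa using hF.fderiv_self_lt (z := 0) (by simpa using hF.radius_pos)

lemma pos_of_sphere_pos (hF : IsRobinPotential R F) (hpos : ∀ w, ‖w‖ = R → 0 < F w) {z : E}
    (hz : ‖z‖ ≤ R) : 0 < F z := by
  obtain ⟨w, hw, t, ht, rfl⟩ := exists_smul_eq_of_norm_le hF.radius_pos hz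
  rcases ht.1.eq_or_lt with rfl | ht0
  · simpa using hF.zero_pos
  · exact (mul_pos ht0 (hpos w hw)).trans_le (hF.smul_le hw ht)

lemma le_add_of_sphere_le (hF : IsRobinPotential R F) {L : ℝ} (hL : ∀ w, ‖w‖ = R → F w ≤ L)
    {z : E} (hz : ‖z‖ ≤ R) : F z ≤ F 0 + L := by
  obtain ⟨w, hw, t, ht, rfl⟩ := exists_smul_eq_of_norm_le hF.radius_pos hz
  have hL0 : 0 < L := by
    linarith [hF.zero_pos, hF.two_mul_zero_le hw, hL w hw, hL (-w) (by rw [norm_neg, hw])]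
  have hheight := hF.sub_fderiv_le hz
  have hslope : t * fderiv ℝ F (t • w) w ≤ t * L :=
    mul_le_mul_of_nonneg_left ((hF.fderiv_le_of_norm_le hz hw).trans (hL w hw)) ht.1
  rw [map_smul, smul_eq_mul] at hheight
  linarith [mul_le_of_le_one_left hL0.le ht.2]

end IsRobinPotential

/-! ### The gradient image of a Robin potential -/

section Gradient

variable {E : Type*} [NormedAddCommGroup E] [InnerProductSpace ℝ E] [CompleteSpace E]
  {F : E → ℝ} {z : E}

lemma differentiableAt_gradient (h : DifferentiableAt ℝ (fderiv ℝ F) z) :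
    DifferentiableAt ℝ (∇ F) z := by
  have hlin : IsBoundedLinearMap ℝ ((InnerProductSpace.toDual ℝ E).symm : StrongDual ℝ E → E) :=
    { map_add := map_add _
      map_smul := by simp
      bound := ⟨1, one_pos, by simp⟩ }
  exact hlin.differentiableAt.comp z h

lemma inner_fderiv_gradient (h : DifferentiableAt ℝ (fderiv ℝ F) z) (u v : E) :
    ⟪fderiv ℝ (∇ F) z u, v⟫ = fderiv ℝ (fderiv ℝ F) z u v := by
  have h1 := (differentiableAt_gradient h).hasFDerivAt.inner ℝ (hasFDerivAt_const v z)
  have h2 := h.hasFDerivAt.clm_apply (hasFDerivAt_const v z)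
  simp only [inner_gradient_left] at h1
  simpa [fderivInnerCLM_apply] using congrArg (· u) (h1.unique h2)

lemma det_fderiv_gradient_add_smul_id {ι : Type*} [Fintype ι] [DecidableEq ι]
    (b : OrthonormalBasis ι ℝ E) (h : DifferentiableAt ℝ (fderiv ℝ F) z) (t : ℝ) :
    (fderiv ℝ (∇ F) z + t • .id ℝ E).det =
      (Matrix.of (fun i j => fderiv ℝ (fderiv ℝ F) z (b i) (b j)) + t • 1).det := by
  rw [ContinuousLinearMap.det, ← LinearMap.det_toMatrix b.toBasis, ← Matrix.det_transpose]
  congr 1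
  ext i j
  simp only [LinearMap.toMatrix_apply, Matrix.transpose_apply, Matrix.add_apply, Matrix.of_apply,
    Matrix.smul_apply, Matrix.one_apply, OrthonormalBasis.coe_toBasis,
    OrthonormalBasis.coe_toBasis_repr_apply, OrthonormalBasis.repr_apply_apply,
    ContinuousLinearMap.coe_coe, add_apply, smul_apply, ContinuousLinearMap.id_apply,
    inner_add_right, real_inner_smul_right, orthonormal_iff_ite.mp b.orthonormal, smul_eq_mul,
    ← inner_fderiv_gradient h]
  rw [real_inner_comm, if_congr eq_comm rfl rfl]

lemma det_fderiv_gradient {ι : Type*} [Fintype ι] [DecidableEq ι] (b : OrthonormalBasis ι ℝ E)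
    (h : DifferentiableAt ℝ (fderiv ℝ F) z) : (fderiv ℝ (∇ F) z).det =
      (Matrix.of fun i j => fderiv ℝ (fderiv ℝ F) z (b i) (b j)).det := by
  simpa using det_fderiv_gradient_add_smul_id b h 0

end Gradient

/-- The Wulff shape of the boundary values of `F` on the sphere of radius `R`: the open convex
set of all `p` whose pairing with every `w` on the sphere is below `F w`. -/
def wulffShape {E : Type*} [NormedAddCommGroup E] [InnerProductSpace ℝ E] (R : ℝ) (F : E → ℝ) :
    Set E :=
  {p | ∀ w, ‖w‖ = R → ⟪p, w⟫ < F w}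

lemma convex_wulffShape {E : Type*} [NormedAddCommGroup E] [InnerProductSpace ℝ E] (R : ℝ)
    (F : E → ℝ) : Convex ℝ (wulffShape R F) := by
  simp only [wulffShape, ofPred_forall]
  refine convex_iInter₂ fun w _ => ?_
  simpa [real_inner_comm] using convex_halfSpace_lt (innerSL ℝ w).toLinearMap.isLinear (F w)

lemma starConvex_wulffShape {E : Type*} [NormedAddCommGroup E] [InnerProductSpace ℝ E] {R : ℝ}
    {F : E → ℝ} (hpos : ∀ w, ‖w‖ = R → 0 < F w) : StarConvex ℝ 0 (wulffShape R F) :=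
  (convex_wulffShape R F).starConvex fun w hw => by rw [inner_zero_left]; exact hpos w hw

namespace IsRobinPotential

variable {E : Type*} [NormedAddCommGroup E] [InnerProductSpace ℝ E] [FiniteDimensional ℝ E]
  {R : ℝ} {F : E → ℝ}

lemma hasFDerivWithinAt_gradient (hF : IsRobinPotential R F) {s : Set E}
    (hs : s ⊆ Metric.ball 0 R) :
    ∀ z ∈ s, HasFDerivWithinAt (∇ F) (fderiv ℝ (∇ F) z) s z := fun _ hz =>
  (differentiableAt_gradient (hF.differentiableAt_fderiv
    (mem_ball_zero_iff.mp (hs hz)).le)).hasFDerivAt.hasFDerivWithinAt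

lemma injOn_gradient (hF : IsRobinPotential R F) : InjOn (∇ F) (Metric.ball 0 R) := by
  intro z hz w hw h
  by_contra hne
  rw [mem_ball_zero_iff] at hz hw
  have h1 := hF.add_fderiv_sub_lt hz.le hw.le hne
  have h2 := hF.add_fderiv_sub_lt hw.le hz.le (Ne.symm hne)
  rw [← inner_gradient_left, inner_sub_right] at h1 h2
  rw [← h] at h2
  linarith

lemma gradient_mem_wulffShape [Nontrivial E] (hF : IsRobinPotential R F) {z : E}
    (hz : ‖z‖ < R) : ∇ F z ∈ wulffShape R F := fun w hw => by
  rw [inner_gradient_left]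
  exact hF.fderiv_lt_of_sphere hz hw

lemma exists_gradient_eq (hF : IsRobinPotential R F) {p : E} (hp : p ∈ wulffShape R F) :
    ∃ y, ‖y‖ < R ∧ ∇ F y = p := by
  have hderiv : ∀ y : E, ‖y‖ ≤ R →
      HasFDerivAt (fun z => F z - ⟪p, z⟫) (fderiv ℝ F y - innerSL ℝ p) y := fun y hy =>
    (hF.differentiableAt hy).hasFDerivAt.sub (innerSL ℝ p).hasFDerivAt
  obtain ⟨y, hy, hmin⟩ := (isCompact_closedBall (0 : E) R).exists_isMinOn
    ⟨0, by simpa using hF.radius_pos.le⟩ fun y hy =>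
      (hderiv y (mem_closedBall_zero_iff.mp hy)).continuousAt.continuousWithinAt
  have hy' := mem_closedBall_zero_iff.mp hy
  rcases hy'.lt_or_eq with hlt | heq
  · have hloc : IsLocalMin (fun z => F z - ⟪p, z⟫) y :=
      hmin.isLocalMin (Metric.closedBall_mem_nhds_of_mem (mem_ball_zero_iff.mpr hlt))
    refine ⟨y, hlt, ext_inner_right ℝ fun v => ?_⟩
    rw [inner_gradient_left, sub_eq_zero.mp (hloc.hasFDerivAt_eq_zero (hderiv y hy')),
      innerSL_apply_apply]
  -- At a boundary minimum the inward radial derivative `⟪p, y⟫ - F y` would be nonnegative.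
  · have hcone : (0 : E) - y ∈ posTangentConeAt (Metric.closedBall 0 R) y :=
      sub_mem_posTangentConeAt_of_segment_subset
        ((convex_closedBall _ _).segment_subset hy (by simpa using hF.radius_pos.le))
    have hnonneg := hmin.localize.hasFDerivWithinAt_nonneg
      (hderiv y hy').hasFDerivWithinAt hcone
    rw [zero_sub, map_neg, sub_apply, hF.robin y heq, innerSL_apply_apply] at hnonneg
    linarith [hp y heq]

lemma image_gradient_ball [Nontrivial E] (hF : IsRobinPotential R F) :
    ∇ F '' Metric.ball 0 R = wulffShape R F := by
  refine Subset.antisymm (image_subset_iff.mpr fun z hz =>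
    hF.gradient_mem_wulffShape (mem_ball_zero_iff.mp hz)) fun p hp => ?_
  obtain ⟨y, hy, rfl⟩ := hF.exists_gradient_eq hp
  exact mem_image_of_mem _ (mem_ball_zero_iff.mpr hy)

variable [MeasurableSpace E] [BorelSpace E]

lemma measurableSet_image_gradient (hF : IsRobinPotential R F) {s : Set E}
    (hs : s ⊆ Metric.ball 0 R) (hm : MeasurableSet s) : MeasurableSet (∇ F '' s) :=
  measurable_image_of_fderivWithin hm (hF.hasFDerivWithinAt_gradient hs) (hF.injOn_gradient.mono hs)

lemma lintegral_abs_det_fderiv_gradient (hF : IsRobinPotential R F) {s : Set E}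
    (hs : s ⊆ Metric.ball 0 R) (hm : MeasurableSet s) :
    ∫⁻ z in s, ENNReal.ofReal |(fderiv ℝ (∇ F) z).det| = volume (∇ F '' s) :=
  lintegral_abs_det_fderiv_eq_addHaar_image volume hm (hF.hasFDerivWithinAt_gradient hs)
    (hF.injOn_gradient.mono hs)

lemma volume_image_gradient_le (hF : IsRobinPotential R F) {s : Set E}
    (hs : s ⊆ Metric.ball 0 R) (hm : MeasurableSet s) {D : ℝ}
    (hD : ∀ z ∈ s, |(fderiv ℝ (∇ F) z).det| ≤ D) :
    volume (∇ F '' s) ≤ ENNReal.ofReal D * volume s := by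
  rw [← hF.lintegral_abs_det_fderiv_gradient hs hm, ← setLIntegral_const]
  exact setLIntegral_mono' hm fun z hz => ENNReal.ofReal_le_ofReal (hD z hz)

lemma le_volume_image_gradient (hF : IsRobinPotential R F) {s : Set E}
    (hs : s ⊆ Metric.ball 0 R) (hm : MeasurableSet s) {d : ℝ}
    (hd : ∀ z ∈ s, d ≤ (fderiv ℝ (∇ F) z).det) :
    ENNReal.ofReal d * volume s ≤ volume (∇ F '' s) := by
  rw [← hF.lintegral_abs_det_fderiv_gradient hs hm, ← setLIntegral_const]
  exact setLIntegral_mono' hm fun z hz =>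
    ENNReal.ofReal_le_ofReal ((hd z hz).trans (le_abs_self _))

end IsRobinPotential

/-! ### Gradients over a half-ball -/

section Shell

variable {E : Type*} [NormedAddCommGroup E] [InnerProductSpace ℝ E]

lemma mem_ball_smul_of_norm_eq_one {e y : E} (he : ‖e‖ = 1) {R : ℝ} (hR : 0 < R)
    (hy : y ∈ Metric.ball ((3 * R / 4) • e) (R / 4)) : ‖y‖ < R ∧ R / 2 < ⟪e, y⟫ := by
  rw [mem_ball_iff_norm] at hy
  constructor
  · have h := norm_add_le (y - (3 * R / 4) • e) ((3 * R / 4) • e)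
    rw [sub_add_cancel, norm_smul, he, norm_of_nonneg (by positivity)] at h
    linarith
  · have h := abs_real_inner_le_norm e (y - (3 * R / 4) • e)
    rw [he, one_mul, inner_sub_right, inner_smul_right, real_inner_self_eq_norm_sq, he] at h
    linarith [(abs_lt.mp (h.trans_lt hy)).1]

variable [MeasurableSpace E] [BorelSpace E] [FiniteDimensional ℝ E] [Nontrivial E]

/-- Bernoulli's inequality bounds the volume `(1 - (1 - η) ^ d) μ(Q)` of the shell
`Q \ (1 - η) • Q`. -/
lemma measureReal_le_of_disjoint_smul (μ : Measure E) [μ.IsAddHaarMeasure] {Q S : Set E}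
    (hQ : StarConvex ℝ 0 Q) (hfin : μ Q ≠ ⊤) (hS : MeasurableSet S) (hSQ : S ⊆ Q) {η : ℝ}
    (hη : 0 ≤ η) (hdisj : η ≤ 1 → Disjoint S ((1 - η) • Q)) :
    μ.real S ≤ Module.finrank ℝ E * η * μ.real Q := by
  have hd : (1 : ℝ) ≤ Module.finrank ℝ E := by exact_mod_cast Module.finrank_pos
  rcases lt_or_ge 1 η with h1 | h1
  · exact (measureReal_mono hSQ hfin).trans
      (le_mul_of_one_le_left measureReal_nonneg (by nlinarith))
  · have hsub : (1 - η) • Q ⊆ Q := by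
      rintro _ ⟨p, hp, rfl⟩
      exact hQ.smul_mem hp (by linarith) (by linarith)
    have hunion : μ.real ((1 - η) • Q ∪ S) ≤ μ.real Q :=
      measureReal_mono (union_subset hsub hSQ) hfin
    rw [measureReal_union (hdisj h1).symm hS (measure_ne_top_of_subset hsub hfin)
      (measure_ne_top_of_subset hSQ hfin), measureReal_def,
      Measure.addHaar_smul_of_nonneg μ (sub_nonneg.mpr h1), ENNReal.toReal_mul,
      ENNReal.toReal_ofReal (pow_nonneg (sub_nonneg.mpr h1) _), ← measureReal_def] at hunion
    have hbernoulli := one_add_mul_le_pow (a := -η) (by linarith) (Module.finrank ℝ E)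
    rw [← sub_eq_add_neg] at hbernoulli
    linarith [mul_le_mul_of_nonneg_right hbernoulli (measureReal_nonneg (μ := μ) (s := Q))]

end Shell

namespace IsRobinPotential

variable {E : Type*} [NormedAddCommGroup E] [InnerProductSpace ℝ E] [FiniteDimensional ℝ E]
  [Nontrivial E] {R : ℝ} {F : E → ℝ}

lemma gradient_notMem_smul_wulffShape (hF : IsRobinPotential R F) {e : E} {L : ℝ} (hL : 0 < L)
    (hLe : ∀ w, ‖w‖ = R → L * ⟪e, w⟫ ≤ F w) (hη : 2 * F 0 / (L * R) ≤ 1) {y : E}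
    (hy : ‖y‖ ≤ R) (hye : R / 2 < ⟪e, y⟫) :
    ∇ F y ∉ (1 - 2 * F 0 / (L * R)) • wulffShape R F := by
  rintro ⟨p, hp, hpy⟩
  dsimp only at hpy
  have hR := hF.radius_pos
  obtain ⟨w, hw, t, ht, rfl⟩ := exists_smul_eq_of_norm_le hR hy
  set η := 2 * F 0 / (L * R) with hη_def
  have hslope : fderiv ℝ F (t • w) (t • w) ≤ (1 - η) * (t * F w) := by
    rw [← inner_gradient_left, ← hpy, real_inner_smul_left, real_inner_smul_right]
    exact mul_le_mul_of_nonneg_left (mul_le_mul_of_nonneg_left (hp w hw).le ht.1)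
      (sub_nonneg.mpr hη)
  have hsupport : L * (R / 2) < t * F w := by
    rw [real_inner_smul_right] at hye
    linarith [mul_lt_mul_of_pos_left hye hL, mul_le_mul_of_nonneg_left (hLe w hw) ht.1]
  have hheight : η * (L * (R / 2)) = F 0 := by rw [hη_def]; field_simp
  have hη0 : 0 < η := by have := hF.zero_pos; positivity
  linarith [hF.sub_fderiv_le hy, hF.smul_le hw ht, mul_lt_mul_of_pos_left hsupport hη0]

/-- The gradients over a half-ball lie in a thin shell of the Wulff shape. -/
lemma mul_volume_ball_le_of_le_det [MeasurableSpace E] [BorelSpace E]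
    (hF : IsRobinPotential R F) (hpos : ∀ w, ‖w‖ = R → 0 < F w)
    (hfin : volume (wulffShape R F) ≠ ⊤) {e : E} (he : ‖e‖ = 1) {L : ℝ} (hL : 0 < L)
    (hLe : ∀ w, ‖w‖ = R → L * ⟪e, w⟫ ≤ F w) {d : ℝ} (hd0 : 0 ≤ d)
    (hd : ∀ z, ‖z‖ < R → d ≤ (fderiv ℝ (∇ F) z).det) :
    d * volume.real (Metric.ball (0 : E) (R / 4)) ≤
      Module.finrank ℝ E * (2 * F 0 / (L * R)) * volume.real (wulffShape R F) := by
  have hR := hF.radius_pos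
  set A : Set E := Metric.ball ((3 * R / 4) • e) (R / 4)
  have hA : ∀ y ∈ A, ‖y‖ < R ∧ R / 2 < ⟪e, y⟫ := fun y hy => mem_ball_smul_of_norm_eq_one he hR hy
  have hAR : A ⊆ Metric.ball 0 R := fun y hy => mem_ball_zero_iff.mpr (hA y hy).1
  have hsub : ∇ F '' A ⊆ wulffShape R F :=
    (image_mono hAR).trans hF.image_gradient_ball.subset
  have hlow := hF.le_volume_image_gradient hAR measurableSet_ball fun z hz => hd z (hA z hz).1
  rw [Measure.addHaar_ball_center] at hlow
  calc d * volume.real (Metric.ball (0 : E) (R / 4)) ≤ volume.real (∇ F '' A) := by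
        simpa only [measureReal_def, ENNReal.toReal_mul, ENNReal.toReal_ofReal hd0] using
          ENNReal.toReal_mono (measure_ne_top_of_subset hsub hfin) hlow
    _ ≤ _ := measureReal_le_of_disjoint_smul volume (starConvex_wulffShape hpos) hfin
        (hF.measurableSet_image_gradient hAR measurableSet_ball) hsub
        (by have := hF.zero_pos; positivity) fun hη => disjoint_left.mpr ?_
  rintro _ ⟨y, hy, rfl⟩
  exact hF.gradient_notMem_smul_wulffShape hL hLe hη (hA y hy).1.le (hA y hy).2

end IsRobinPotential

/-! ### Principal minors -/

lemma exists_orthonormalBasis_apply_eq {E ι κ : Type*} [NormedAddCommGroup E]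
    [InnerProductSpace ℝ E] [FiniteDimensional ℝ E] [Fintype ι]
    (hι : Module.finrank ℝ E = Fintype.card ι) (f : κ ↪ ι) {v : κ → E} (hv : Orthonormal ℝ v) :
    ∃ b : OrthonormalBasis ι ℝ E, ∀ i, b (f i) = v i := by
  have hext : ∀ i, Function.extend f v 0 (f i) = v i := f.injective.extend_apply v 0
  have hrestrict : (range f).domRestrict (Function.extend f v 0) =
      v ∘ (Equiv.ofInjective f f.injective).symm := by
    ext ⟨_, i, rfl⟩
    simp [hext]
  obtain ⟨b, hb⟩ := Orthonormal.exists_orthonormalBasis_extension_of_card_eq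
    (v := Function.extend f v 0) (s := range f) hι
    (by rw [hrestrict]; exact hv.comp _ (Equiv.injective _))
  exact ⟨b, fun i => (hb _ (mem_range_self i)).trans (hext i)⟩

section PrincipalMinors

open Matrix

/-- The sum of the `k × k` principal minors of `H`, which is the `k`-th elementary symmetric
polynomial of its eigenvalues. -/
def principalMinorSum {ι : Type*} [Fintype ι] [DecidableEq ι] (k : ℕ) (H : Matrix ι ι ℝ) : ℝ :=
  ∑ s ∈ Finset.univ.powersetCard k, (H.submatrix (Subtype.val : s → ι) Subtype.val).det

lemma det_gram_nonneg {ι κ : Type*} [Fintype ι] [Fintype κ] [DecidableEq κ] {H : Matrix ι ι ℝ}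
    (hH : H.PosSemidef) (v : κ → EuclideanSpace ℝ ι) :
    0 ≤ (of fun i j => (v i).ofLp ⬝ᵥ H *ᵥ (v j).ofLp).det := by
  let W : Matrix ι κ ℝ := of fun a j => (v j).ofLp a
  have hgram : of (fun i j => (v i).ofLp ⬝ᵥ H *ᵥ (v j).ofLp) = Wᴴ * H * W := by
    ext i j
    rw [Matrix.mul_assoc]
    rfl
  rw [hgram]
  exact (hH.conjTranspose_mul_mul_same W).det_nonneg

variable {ι : Type*} [Fintype ι] [DecidableEq ι] {H : Matrix ι ι ℝ}

lemma neg_one_pow_mul_charpoly_coeff (H : Matrix ι ι ℝ) {k : ℕ} (hk : k ≤ Fintype.card ι) :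
    (-1) ^ k * H.charpoly.coeff (Fintype.card ι - k) = principalMinorSum k H := by
  rw [charpoly_coeff_eq_sum_minors _ _ hk, ← mul_assoc, ← mul_pow]
  simp [principalMinorSum]

lemma principalMinorSum_neg (k : ℕ) (H : Matrix ι ι ℝ) :
    principalMinorSum k (-H) = (-1) ^ k * principalMinorSum k H := by
  simp only [principalMinorSum, Finset.mul_sum]
  refine Finset.sum_congr rfl fun s hs => ?_
  rw [submatrix_neg, Pi.neg_apply, Pi.neg_apply, det_neg, Fintype.card_coe,
    (Finset.mem_powersetCard.mp hs).2]

lemma principalMinorSum_nonneg (hH : H.PosSemidef) (k : ℕ) : 0 ≤ principalMinorSum k H :=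
  Finset.sum_nonneg fun _ _ => (hH.submatrix _).det_nonneg

lemma det_submatrix_le_principalMinorSum {κ : Type*} [Fintype κ] [DecidableEq κ]
    (hH : H.PosSemidef) (f : κ ↪ ι) :
    (H.submatrix f f).det ≤ principalMinorSum (Fintype.card κ) H := by
  let s : Finset ι := Finset.univ.map f
  let e : κ ≃ s := Equiv.ofBijective (fun i => ⟨f i, Finset.mem_map_of_mem f (Finset.mem_univ i)⟩)
    ((Fintype.bijective_iff_injective_and_card _).mpr
      ⟨fun i j h => f.injective (Subtype.ext_iff.mp h),
        by rw [Fintype.card_coe, Finset.card_map, Finset.card_univ]⟩)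
  have hdet : (H.submatrix f f).det = (H.submatrix (Subtype.val : s → ι) Subtype.val).det :=
    det_submatrix_equiv_self e (H.submatrix (Subtype.val : s → ι) Subtype.val)
  rw [hdet]
  exact Finset.single_le_sum
    (f := fun s : Finset ι => (H.submatrix (Subtype.val : s → ι) Subtype.val).det)
    (fun _ _ => (hH.submatrix _).det_nonneg)
    (Finset.mem_powersetCard.mpr ⟨Finset.subset_univ _, by simp [s]⟩)

/-- All coefficients of the polynomial `t ↦ det (H + t)` are sums of principal minors. -/
lemma principalMinorSum_mul_pow_le_det (hH : H.PosSemidef) {k : ℕ} (hk : k ≤ Fintype.card ι)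
    {t : ℝ} (ht : 0 ≤ t) :
    principalMinorSum k H * t ^ (Fintype.card ι - k) ≤ (H + t • (1 : Matrix ι ι ℝ)).det := by
  have hcoeff : ∀ j ≤ Fintype.card ι,
      (-H).charpoly.coeff (Fintype.card ι - j) = principalMinorSum j H := fun j hj => by
    have := neg_one_pow_mul_charpoly_coeff (-H) hj
    rw [principalMinorSum_neg] at this
    exact mul_left_cancel₀ (pow_ne_zero j (by norm_num)) this
  have heval : (H + t • (1 : Matrix ι ι ℝ)).det = (-H).charpoly.eval t := by
    rw [eval_charpoly, sub_neg_eq_add, add_comm, scalar_apply, smul_one_eq_diagonal]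
  rw [heval, Polynomial.eval_eq_sum_range, charpoly_natDegree_eq_dim, ← hcoeff k hk]
  refine Finset.single_le_sum (f := fun i => (-H).charpoly.coeff i * t ^ i) (fun i hi => ?_)
    (Finset.mem_range.mpr (by omega))
  have := hcoeff _ (Nat.sub_le (Fintype.card ι) i)
  rw [Nat.sub_sub_self (Finset.mem_range_succ_iff.mp hi)] at this
  rw [this]
  exact mul_nonneg (principalMinorSum_nonneg hH _) (pow_nonneg ht _)

lemma principalMinorSum_transpose_mul_mul {k : ℕ} (hk : k ≤ Fintype.card ι) {W : Matrix ι ι ℝ}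
    (hW : Wᵀ * W = 1) : principalMinorSum k (Wᵀ * H * W) = principalMinorSum k H := by
  rw [← neg_one_pow_mul_charpoly_coeff _ hk, ← neg_one_pow_mul_charpoly_coeff _ hk,
    charpoly_mul_comm, ← mul_assoc, mul_eq_one_comm.mp hW, one_mul]

lemma det_gram_le_principalMinorSum {κ : Type*} [Fintype κ] [DecidableEq κ] (hH : H.PosSemidef)
    {v : κ → EuclideanSpace ℝ ι} (hv : Orthonormal ℝ v) :
    (of fun i j => (v i).ofLp ⬝ᵥ H *ᵥ (v j).ofLp).det ≤
      principalMinorSum (Fintype.card κ) H := by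
  have hcard : Fintype.card κ ≤ Fintype.card ι := by
    simpa using hv.linearIndependent.fintype_card_le_finrank
  obtain ⟨f⟩ := Function.Embedding.nonempty_of_card_le hcard
  obtain ⟨b, hb⟩ := exists_orthonormalBasis_apply_eq finrank_euclideanSpace f hv
  let W : Matrix ι ι ℝ := of fun a j => (b j).ofLp a
  have hW : Wᵀ * W = 1 := by
    ext i j
    simp [one_apply, ← orthonormal_iff_ite.mp b.orthonormal i j, Matrix.mul_apply, W,
      PiLp.inner_apply, mul_comm]
  have hpsd : (Wᵀ * H * W).PosSemidef := by simpa using hH.conjTranspose_mul_mul_same W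
  rw [← principalMinorSum_transpose_mul_mul hcard hW]
  refine (congrArg det ?_).trans_le (det_submatrix_le_principalMinorSum hpsd f)
  ext i j
  rw [submatrix_apply, of_apply, ← hb i, ← hb j, mul_assoc]
  rfl

lemma det_submatrix_succAbove {n : ℕ} {M : Matrix (Fin (n + 1)) (Fin (n + 1)) ℝ}
    (hM : IsUnit M.det) (i : Fin (n + 1)) :
    (M.submatrix i.succAbove i.succAbove).det = M.det * M⁻¹ i i := by
  have h := adjugate_fin_succ_eq_det_submatrix M i i
  rw [Even.neg_one_pow ⟨_, rfl⟩, one_mul] at h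
  rw [← h, inv_def, Matrix.smul_apply, smul_eq_mul, ← mul_assoc, Ring.mul_inverse_cancel _ hM,
    one_mul]

lemma sq_div_le_inv_apply {M : Matrix ι ι ℝ} (hM : M.PosDef) {u : ι → ℝ} (hu : u ⬝ᵥ u = 1)
    {t : ℝ} (ht : 0 < t) (hMu : M *ᵥ u = t • u) (i : ι) : u i ^ 2 / t ≤ M⁻¹ i i := by
  have hinv : M⁻¹ *ᵥ u = t⁻¹ • u := by
    rw [← inv_smul_smul₀ ht.ne' u, ← hMu, mulVec_smul, mulVec_mulVec,
      nonsing_inv_mul _ hM.det_pos.ne'.isUnit, one_mulVec, hMu, inv_smul_smul₀ ht.ne']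
  have hcol : u ⬝ᵥ M⁻¹.col i = u i / t := by
    rw [← mulVec_single_one, dotProduct_mulVec, ← mulVec_transpose,
      ← conjTranspose_eq_transpose_of_trivial, hM.inv.isHermitian.eq, hinv]
    simp [div_eq_inv_mul]
  -- Positivity of `M⁻¹` on the component of `Pi.single i 1` orthogonal to `u`.
  have hpos := hM.inv.posSemidef.dotProduct_mulVec_nonneg (Pi.single i 1 - u i • u)
  simp only [star_trivial, mulVec_sub, mulVec_smul, hinv, sub_dotProduct, dotProduct_sub,
    smul_dotProduct, dotProduct_smul, hcol, hu, single_one_dotProduct, smul_eq_mul, mul_one,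
    mulVec_single_one, col_apply, sub_self, mul_zero, sub_zero] at hpos
  rw [pow_two, mul_div_assoc]
  linarith

lemma sq_mul_principalMinorSum_mul_pow_le_det_of_pos {n k : ℕ} (hkn : k ≤ n)
    {H : Matrix (Fin (n + 1)) (Fin (n + 1)) ℝ} (hH : H.PosSemidef) {u : Fin (n + 1) → ℝ}
    (hu : u ⬝ᵥ u = 1) (hHu : H *ᵥ u = 0) (i : Fin (n + 1)) {t : ℝ} (ht : 0 < t) :
    u i ^ 2 * principalMinorSum k H * t ^ (n - k) ≤
      ((H + t • (1 : Matrix _ _ ℝ)).submatrix i.succAbove i.succAbove).det := by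
  set M := H + t • (1 : Matrix (Fin (n + 1)) (Fin (n + 1)) ℝ) with hM_def
  have hM : M.PosDef := (PosDef.one.smul ht).posSemidef_add hH
  have hMu : M *ᵥ u = t • u := by rw [hM_def, add_mulVec, hHu, zero_add, smul_mulVec, one_mulVec]
  have hdet : principalMinorSum k H * t ^ (n - k) * t ≤ M.det := by
    have := principalMinorSum_mul_pow_le_det hH (k := k) (by simp; omega) ht.le
    rwa [Fintype.card_fin, Nat.sub_add_comm hkn, pow_succ, ← mul_assoc] at this
  rw [det_submatrix_succAbove hM.det_pos.ne'.isUnit]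
  calc u i ^ 2 * principalMinorSum k H * t ^ (n - k)
      = (principalMinorSum k H * t ^ (n - k) * t) * (u i ^ 2 / t) := by field_simp
    _ ≤ M.det * (u i ^ 2 / t) := mul_le_mul_of_nonneg_right hdet (by positivity)
    _ ≤ M.det * M⁻¹ i i :=
        mul_le_mul_of_nonneg_left (sq_div_le_inv_apply hM hu ht hMu i) hM.det_pos.le

/-- If `u` is a unit null vector of `H ≥ 0`, the block of `H + t` omitting an index `i` keeps the
share `u i ^ 2` of `σ_k(H)`. -/
lemma sq_mul_principalMinorSum_mul_pow_le_det {n k : ℕ} (hkn : k ≤ n)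
    {H : Matrix (Fin (n + 1)) (Fin (n + 1)) ℝ} (hH : H.PosSemidef) {u : Fin (n + 1) → ℝ}
    (hu : u ⬝ᵥ u = 1) (hHu : H *ᵥ u = 0) (i : Fin (n + 1)) {t : ℝ} (ht : 0 ≤ t) :
    u i ^ 2 * principalMinorSum k H * t ^ (n - k) ≤
      ((H + t • (1 : Matrix _ _ ℝ)).submatrix i.succAbove i.succAbove).det := by
  refine le_on_closure (s := Ioi (0 : ℝ)) (x := t)
    (f := fun t => u i ^ 2 * principalMinorSum k H * t ^ (n - k))
    (g := fun t => ((H + t • (1 : Matrix _ _ ℝ)).submatrix i.succAbove i.succAbove).det)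
    (fun t ht => sq_mul_principalMinorSum_mul_pow_le_det_of_pos hkn hH hu hHu i ht)
    (by fun_prop) ?_ (closure_Ioi (0 : ℝ) ▸ ht)
  exact ((continuous_const.add (continuous_id.smul continuous_const)).matrix_submatrix
    _ _).matrix_det.continuousOn

end PrincipalMinors

/-! ### Greedy frames of compact sets -/

/-- A greedy frame of `P`: an orthonormal family `b` together with points `p i` of `P`, where `p i`
lies in the span of `b 0, …, b i` and is a point of `P` farthest from the span of
`b 0, …, b (i - 1)`, at the distance `⟪p i, b i⟫`. -/
structure IsGreedyFrame {E : Type*} [NormedAddCommGroup E] [InnerProductSpace ℝ E] {n : ℕ}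
    (P : Set E) (b p : Fin n → E) : Prop where
  orthonormal : Orthonormal ℝ b
  mem : ∀ i, p i ∈ P
  inner_eq_zero : ∀ i j, i < j → ⟪p i, b j⟫ = 0
  abs_inner_le : ∀ i j, i ≤ j → ∀ q ∈ P, |⟪q, b j⟫| ≤ ⟪p i, b i⟫

section GreedyFrame

variable {E : Type*} [NormedAddCommGroup E] [InnerProductSpace ℝ E]

lemma exists_norm_eq_one_smul_eq [Nontrivial E] (p : E) : ∃ b : E, ‖b‖ = 1 ∧ ‖p‖ • b = p := by
  rcases eq_or_ne p 0 with rfl | hp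
  · obtain ⟨b, hb⟩ := exists_norm_eq E zero_le_one
    exact ⟨b, hb, by simp⟩
  · exact ⟨‖p‖⁻¹ • p, norm_smul_inv_norm hp, smul_inv_smul₀ (norm_ne_zero_iff.mpr hp) p⟩

lemma orthonormal_finCons {n : ℕ} {b₀ : E} (hb₀ : ‖b₀‖ = 1) {b : Fin n → (ℝ ∙ b₀)ᗮ}
    (hb : Orthonormal ℝ b) : Orthonormal ℝ (Fin.cons b₀ fun i => (b i : E)) :=
  orthonormal_vecCons_iff.mpr ⟨hb₀,
    fun i => Submodule.mem_orthogonal_singleton_iff_inner_right.mp (b i).2,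
    hb.comp_linearIsometry (ℝ ∙ b₀)ᗮ.subtypeₗᵢ⟩

namespace IsGreedyFrame

lemma cons {n : ℕ} {P : Set E} {b₀ p₀ : E} (hb₀ : ‖b₀‖ = 1) (hpb : ‖p₀‖ • b₀ = p₀) (hp₀ : p₀ ∈ P)
    (hmax : ∀ q ∈ P, ‖q‖ ≤ ‖p₀‖) {b p : Fin n → (ℝ ∙ b₀)ᗮ}
    (h : IsGreedyFrame ((ℝ ∙ b₀)ᗮ.orthogonalProjectionOnto '' P) b p) :
    ∃ q, IsGreedyFrame P (Fin.cons b₀ fun i => (b i : E)) (Fin.cons p₀ q) := by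
  choose q hqP hqp using h.mem
  have hproj : ∀ x : E, ∀ j, ⟪x, (b j : E)⟫ = ⟪(ℝ ∙ b₀)ᗮ.orthogonalProjectionOnto x, b j⟫ :=
    fun x j => (Submodule.inner_orthogonalProjectionOnto_eq_of_mem_right _ _).symm
  have hp₀b₀ : ⟪p₀, b₀⟫ = ‖p₀‖ := by
    rw [← hpb, real_inner_smul_left, real_inner_self_eq_norm_sq, hb₀, hpb, one_pow, mul_one]
  have hp₀b : ∀ j, ⟪p₀, (b j : E)⟫ = 0 := fun j => by
    rw [← hpb, real_inner_smul_left,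
      Submodule.mem_orthogonal_singleton_iff_inner_right.mp (b j).2, mul_zero]
  have hle : ∀ x ∈ P, ∀ y : E, ‖y‖ = 1 → |⟪x, y⟫| ≤ ‖p₀‖ := fun x hx y hy =>
    (abs_real_inner_le_norm x y).trans (by rw [hy, mul_one]; exact hmax x hx)
  refine ⟨q, orthonormal_finCons hb₀ h.orthonormal, Fin.cases hp₀ hqP, ?_, ?_⟩
  · simpa [Fin.forall_fin_succ, hp₀b, hproj (q _), hqp] using h.inner_eq_zero
  · simp only [Fin.forall_fin_succ, Fin.cons_zero, Fin.cons_succ, hp₀b₀, hproj (q _), hqp]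
    refine ⟨⟨fun _ x hx => hle x hx _ hb₀, fun j _ x hx => hle x hx _ (h.orthonormal.1 j)⟩,
      fun i => ⟨fun hi => absurd hi (Fin.succ_pos i).not_ge, fun j hij x hx => ?_⟩⟩
    rw [hproj]
    exact h.abs_inner_le i j (Fin.succ_le_succ_iff.mp hij) _ (mem_image_of_mem _ hx)

theorem exists_of_isCompact (n : ℕ) : ∀ {E : Type*} [NormedAddCommGroup E]
    [InnerProductSpace ℝ E] [FiniteDimensional ℝ E], Module.finrank ℝ E = n →
    ∀ P : Set E, IsCompact P → P.Nonempty → ∃ b p : Fin n → E, IsGreedyFrame P b p := by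
  induction n with
  | zero =>
    intro E _ _ _ _ P _ _
    exact ⟨Fin.elim0, Fin.elim0, ⟨⟨fun i => i.elim0, fun i => i.elim0⟩, fun i => i.elim0,
      fun i => i.elim0, fun i => i.elim0⟩⟩
  | succ n ih =>
    intro E _ _ _ hE P hP hne
    have : Nontrivial E := Module.nontrivial_of_finrank_pos (R := ℝ) (by omega)
    have : Fact (Module.finrank ℝ E = n + 1) := ⟨hE⟩
    obtain ⟨p₀, hp₀, hmax⟩ := hP.exists_isMaxOn hne continuous_norm.continuousOn
    obtain ⟨b₀, hb₀, hpb⟩ := exists_norm_eq_one_smul_eq p₀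
    obtain ⟨b, p, hbp⟩ := ih
      (Submodule.finrank_orthogonal_span_singleton (norm_ne_zero_iff.mp (hb₀.trans_ne one_ne_zero)))
      ((ℝ ∙ b₀)ᗮ.orthogonalProjectionOnto '' P)
      (hP.image (ℝ ∙ b₀)ᗮ.orthogonalProjectionOnto.continuous) (hne.image _)
    obtain ⟨q, hq⟩ := cons hb₀ hpb hp₀ (fun q hq => hmax hq) hbp
    exact ⟨_, _, hq⟩

lemma antitone {n : ℕ} {P : Set E} {b p : Fin n → E} (h : IsGreedyFrame P b p) :
    Antitone fun i => ⟪p i, b i⟫ :=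
  fun i j hij => (le_abs_self _).trans (h.abs_inner_le i j hij _ (h.mem j))

section Basis

variable {n : ℕ} [NeZero n] {P : Set E} {p : Fin n → E}

lemma apply_zero_eq {b : OrthonormalBasis (Fin n) ℝ E} (h : IsGreedyFrame P b p) :
    p 0 = ⟪p 0, b 0⟫ • b 0 := by
  conv_lhs => rw [← b.sum_repr' (p 0)]
  rw [Finset.sum_eq_single 0, real_inner_comm]
  · intro i _ hi
    rw [real_inner_comm, h.inner_eq_zero 0 i (Fin.pos_iff_ne_zero.mpr hi), zero_smul]
  · simp

lemma norm_le {b : OrthonormalBasis (Fin n) ℝ E} (h : IsGreedyFrame P b p) {q : E}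
    (hq : q ∈ P) : ‖q‖ ≤ n * ⟪p 0, b 0⟫ := by
  calc ‖q‖ = ‖∑ i, ⟪b i, q⟫ • b i‖ := by rw [b.sum_repr']
    _ ≤ ∑ i, ‖⟪b i, q⟫ • b i‖ := norm_sum_le _ _
    _ ≤ ∑ _i : Fin n, ⟪p 0, b 0⟫ := Finset.sum_le_sum fun i _ => by
        rw [norm_smul, b.norm_eq_one, mul_one, real_inner_comm]
        exact h.abs_inner_le 0 i (Fin.zero_le i) q hq
    _ = n * ⟪p 0, b 0⟫ := by simp

end Basis

end IsGreedyFrame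

end GreedyFrame

/-! ### Volumes of boxes, simplices and slabs -/

section Volumes

lemma det_constr_of_triangular {E : Type*} [NormedAddCommGroup E] [InnerProductSpace ℝ E] {n : ℕ}
    (b : OrthonormalBasis (Fin n) ℝ E) {p : Fin n → E}
    (htri : ∀ i j, i < j → ⟪p i, b j⟫ = 0) :
    LinearMap.det (b.toBasis.constr ℝ p) = ∏ i, ⟪p i, b i⟫ := by
  have hentry : ∀ i j, LinearMap.toMatrix b.toBasis b.toBasis (b.toBasis.constr ℝ p) i j =
      ⟪p j, b i⟫ := fun i j => by
    rw [LinearMap.toMatrix_apply, Module.Basis.constr_basis, b.coe_toBasis_repr_apply,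
      b.repr_apply_apply, real_inner_comm]
  rw [← LinearMap.det_toMatrix b.toBasis,
    Matrix.det_of_isUpperTriangular fun i j hij => (hentry i j).trans (htri j i hij)]
  exact Finset.prod_congr rfl fun i _ => hentry i i

variable {E ι : Type*} [NormedAddCommGroup E] [InnerProductSpace ℝ E] [FiniteDimensional ℝ E]
  [MeasurableSpace E] [BorelSpace E] [Fintype ι]

lemma volume_inner_mem_pi (b : OrthonormalBasis ι ℝ E) {s : ι → Set ℝ}
    (hs : ∀ i, MeasurableSet (s i)) :
    volume {x : E | ∀ i, ⟪b i, x⟫ ∈ s i} = ∏ i, volume (s i) := by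
  have hpre : {x : E | ∀ i, ⟪b i, x⟫ ∈ s i} =
      (@WithLp.ofLp 2 (ι → ℝ) ∘ b.repr) ⁻¹' univ.pi s := by
    ext x
    simp [b.repr_apply_apply]
  rw [hpre, ((PiLp.volume_preserving_ofLp ι).comp b.measurePreserving_repr).measure_preimage
    (MeasurableSet.univ_pi hs).nullMeasurableSet, volume_pi_pi]

lemma le_volume_of_simplex_subset {n : ℕ} (b : OrthonormalBasis (Fin n) ℝ E) {p : Fin n → E}
    (htri : ∀ i j, i < j → ⟪p i, b j⟫ = 0) {S : Set E}
    (hS : ∀ t : Fin n → ℝ, (∀ i, 0 < t i) → ∑ i, t i < 1 → ∑ i, t i • p i ∈ S) :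
    ENNReal.ofReal ((∏ i, ⟪p i, b i⟫) / n ^ n) ≤ volume S := by
  set cube : Set E := {x | ∀ i, ⟪b i, x⟫ ∈ Ioo 0 (1 / (n : ℝ))}
  have hcube : ⇑(b.toBasis.constr ℝ p) '' cube ⊆ S := by
    rintro _ ⟨x, hx, rfl⟩
    rw [b.toBasis.constr_apply_fintype ℝ p x]
    simp only [b.toBasis.equivFun_apply, b.coe_toBasis_repr_apply, b.repr_apply_apply]
    refine hS _ (fun i => (hx i).1) ?_
    rcases isEmpty_or_nonempty (Fin n) with _ | ⟨⟨i⟩⟩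
    · simp
    · refine (Finset.sum_lt_sum_of_nonempty ⟨i, Finset.mem_univ i⟩ fun i _ => (hx i).2).trans_le ?_
      simpa [div_eq_mul_inv] using mul_inv_le_one
  calc ENNReal.ofReal ((∏ i, ⟪p i, b i⟫) / n ^ n)
      ≤ ENNReal.ofReal (|∏ i, ⟪p i, b i⟫| * (1 / n) ^ n) := by
        rw [one_div, inv_pow, ← div_eq_mul_inv]
        gcongr
        exact le_abs_self _
    _ = volume (⇑(b.toBasis.constr ℝ p) '' cube) := by
        rw [Measure.addHaar_image_linearMap, det_constr_of_triangular b htri,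
          volume_inner_mem_pi b fun _ => measurableSet_Ioo, ENNReal.ofReal_mul (abs_nonneg _),
          ENNReal.ofReal_pow (by positivity)]
        simp
    _ ≤ volume S := measure_mono hcube

lemma volume_closedBall_inter_slab_le [Nontrivial E] {e : E} (he : ‖e‖ = 1) (C c δ : ℝ) :
    volume {x : E | ‖x‖ ≤ C ∧ ⟪e, x⟫ ∈ Icc (c - δ) c} ≤
      ENNReal.ofReal δ * ENNReal.ofReal (2 * C) ^ (Module.finrank ℝ E - 1) := by
  obtain ⟨m, hm⟩ := Nat.exists_eq_succ_of_ne_zero (Module.finrank_pos (R := ℝ) (M := E)).ne'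
  obtain ⟨b, hb⟩ := exists_orthonormalBasis_apply_eq (ι := Fin (m + 1)) (by simpa using hm)
    (⟨fun _ => 0, fun _ _ _ => Subsingleton.elim _ _⟩ : Unit ↪ Fin (m + 1)) (v := fun _ => e)
    ⟨fun _ => he, fun i j h => absurd (Subsingleton.elim i j) h⟩
  have hb0 : b 0 = e := hb ()
  set s : Fin (m + 1) → Set ℝ := Fin.cons (Icc (c - δ) c) fun _ => Icc (-C) C
  calc volume {x : E | ‖x‖ ≤ C ∧ ⟪e, x⟫ ∈ Icc (c - δ) c} ≤ volume {x | ∀ i, ⟪b i, x⟫ ∈ s i} := by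
        refine measure_mono fun x hx => Fin.cases (by simpa [s, hb0] using hx.2) fun i => ?_
        have hle := abs_real_inner_le_norm (b i.succ) x
        rw [b.norm_eq_one, one_mul] at hle
        exact abs_le.mp (hle.trans hx.1)
    _ = ∏ i, volume (s i) :=
        volume_inner_mem_pi b (Fin.cases measurableSet_Icc fun _ => measurableSet_Icc)
    _ = _ := by simp [s, Fin.prod_univ_succ, hm, two_mul]

end Volumes

/-! ### Restrictions and perturbations of Robin potentials -/

section Perturbation

lemma fderiv_comp_add {E E' : Type*} [NormedAddCommGroup E] [NormedSpace ℝ E]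
    [NormedAddCommGroup E'] [NormedSpace ℝ E'] {f : E → ℝ} {L : E' →L[ℝ] E} {c : E} {z : E'}
    (hf : DifferentiableAt ℝ f (L z + c)) :
    fderiv ℝ (fun x => f (L x + c)) z = (fderiv ℝ f (L z + c)).comp L :=
  (hf.hasFDerivAt.comp z (L.hasFDerivAt.add_const c)).fderiv

lemma fderiv_fderiv_comp_add {E E' : Type*} [NormedAddCommGroup E] [NormedSpace ℝ E]
    [NormedAddCommGroup E'] [NormedSpace ℝ E'] {f : E → ℝ} {L : E' →L[ℝ] E} {c : E} {z : E'}
    (hf : ContDiffAt ℝ 2 f (L z + c)) (v w : E') :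
    fderiv ℝ (fderiv ℝ fun x => f (L x + c)) z v w =
      fderiv ℝ (fderiv ℝ f) (L z + c) (L v) (L w) := by
  have hL : HasFDerivAt (fun x => L x + c) L z := L.hasFDerivAt.add_const c
  have hev : fderiv ℝ (fun x => f (L x + c)) =ᶠ[nhds z]
      fun x => (fderiv ℝ f (L x + c)).comp L := by
    filter_upwards [hL.continuousAt.eventually (hf.eventually (by simp))] with x hx
    exact fderiv_comp_add (hx.differentiableAt (by norm_num))
  have hd : DifferentiableAt ℝ (fderiv ℝ f) (L z + c) :=
    (hf.fderiv_right (m := 1) (by norm_num)).differentiableAt (by norm_num)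
  have hcomp : HasFDerivAt (fun x => (fderiv ℝ f (L x + c)).comp L) _ z :=
    (hd.hasFDerivAt.comp z hL).clm_comp (hasFDerivAt_const L z)
  rw [hev.fderiv_eq, hcomp.fderiv]
  simp

lemma fderiv_fderiv_add {E : Type*} [NormedAddCommGroup E] [NormedSpace ℝ E] {f g : E → ℝ} {z : E}
    (hf : ContDiffAt ℝ 2 f z) (hg : ContDiffAt ℝ 2 g z) :
    fderiv ℝ (fderiv ℝ fun x => f x + g x) z =
      fderiv ℝ (fderiv ℝ f) z + fderiv ℝ (fderiv ℝ g) z := by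
  have hev : fderiv ℝ (fun x => f x + g x) =ᶠ[nhds z] fun x => fderiv ℝ f x + fderiv ℝ g x := by
    filter_upwards [hf.eventually (by simp), hg.eventually (by simp)] with x h1 h2
    exact fderiv_fun_add (h1.differentiableAt (by norm_num)) (h2.differentiableAt (by norm_num))
  rw [hev.fderiv_eq, fderiv_fun_add]
  · exact (hf.fderiv_right (m := 1) (by norm_num)).differentiableAt (by norm_num)
  · exact (hg.fderiv_right (m := 1) (by norm_num)).differentiableAt (by norm_num)

/-- The paraboloid of curvature `ε` satisfying the Robin condition on the sphere of radius `R`. -/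
def robinParaboloid {E : Type*} [NormedAddCommGroup E] (R ε : ℝ) (x : E) : ℝ :=
  ε * (‖x‖ ^ 2 + R ^ 2) / 2

lemma robinParaboloid_of_norm_eq {E : Type*} [NormedAddCommGroup E] {R : ℝ} (ε : ℝ) {w : E}
    (hw : ‖w‖ = R) : robinParaboloid R ε w = ε * R ^ 2 := by
  rw [robinParaboloid, hw]
  ring

variable {E E' : Type*} [NormedAddCommGroup E] [InnerProductSpace ℝ E] [NormedAddCommGroup E']
  [InnerProductSpace ℝ E'] {R : ℝ} {F : E → ℝ}

lemma contDiff_robinParaboloid (ε : ℝ) : ContDiff ℝ 2 (robinParaboloid R ε : E → ℝ) :=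
  (contDiff_const.mul ((contDiff_norm_sq ℝ).add contDiff_const)).div_const _

lemma fderiv_robinParaboloid (ε : ℝ) :
    fderiv ℝ (robinParaboloid R ε : E → ℝ) = fun x => ε • innerSL ℝ x := by
  ext z v
  have h := (((hasStrictFDerivAt_norm_sq z).hasFDerivAt.add_const (R ^ 2)).const_mul ε).mul_const
    (2⁻¹ : ℝ)
  simp only [← div_eq_mul_inv] at h
  rw [show robinParaboloid R ε = fun x : E => ε * (‖x‖ ^ 2 + R ^ 2) / 2 from rfl, h.fderiv]
  simp
  ring

lemma fderiv_fderiv_robinParaboloid (ε : ℝ) (z : E) :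
    fderiv ℝ (fderiv ℝ (robinParaboloid R ε)) z = ε • innerSL ℝ := by
  rw [fderiv_robinParaboloid, fderiv_fun_const_smul (innerSL ℝ).differentiableAt,
    (innerSL ℝ).fderiv]

namespace IsRobinPotential

lemma comp_linearIsometry (hF : IsRobinPotential R F) (J : E' →ₗᵢ[ℝ] E) :
    IsRobinPotential R (fun x => F (J x)) where
  radius_pos := hF.radius_pos
  contDiffAt z hz := (hF.contDiffAt (J z) (by rwa [J.norm_map])).comp z J.contDiff.contDiffAt
  hess_pos z hz v hv := by
    rw [← J.norm_map] at hz
    have := fderiv_fderiv_comp_add (L := J.toContinuousLinearMap) (c := 0)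
      (by simpa using hF.contDiffAt _ hz.le) v v
    simp only [LinearIsometry.coe_toContinuousLinearMap, add_zero] at this
    rw [this]
    exact hF.hess_pos _ hz _ (by rwa [Ne, map_eq_zero_iff J J.injective])
  robin z hz := by
    rw [← J.norm_map] at hz
    have := fderiv_comp_add (L := J.toContinuousLinearMap) (c := 0)
      (by simpa using hF.differentiableAt hz.le)
    simp only [LinearIsometry.coe_toContinuousLinearMap, add_zero] at this
    rw [this]
    exact hF.robin _ hz

lemma add_robinParaboloid (hF : IsRobinPotential R F) {ε : ℝ} (hε : 0 ≤ ε) :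
    IsRobinPotential R (fun x => F x + robinParaboloid R ε x) where
  radius_pos := hF.radius_pos
  contDiffAt z hz := (hF.contDiffAt z hz).add (contDiff_robinParaboloid ε).contDiffAt
  hess_pos z hz v hv := by
    rw [fderiv_fderiv_add (hF.contDiffAt z hz.le) (contDiff_robinParaboloid ε).contDiffAt,
      fderiv_fderiv_robinParaboloid]
    exact add_pos_of_pos_of_nonneg (hF.hess_pos z hz v hv)
      (mul_nonneg hε real_inner_self_nonneg)
  robin z hz := by
    rw [fderiv_fun_add (hF.differentiableAt hz.le)
      ((contDiff_robinParaboloid ε).differentiable (by norm_num) z), add_apply, hF.robin z hz,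
      fderiv_robinParaboloid, robinParaboloid_of_norm_eq ε hz]
    simp [hz]

lemma fderiv_fderiv_sub_inner (hF : IsRobinPotential R F) (w : E) {z : E} (hz : ‖z‖ ≤ R) :
    fderiv ℝ (fderiv ℝ (fun x => F x - ⟪w, x⟫)) z = fderiv ℝ (fderiv ℝ F) z := by
  have hd : fderiv ℝ (fun x : E => -⟪w, x⟫) = fun _ => -innerSL ℝ w :=
    funext fun x => ((innerSL ℝ w).hasFDerivAt.neg).fderiv
  have hlin : ContDiffAt ℝ 2 (fun x => -⟪w, x⟫) z := (innerSL ℝ w).contDiff.neg.contDiffAt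
  simp only [sub_eq_add_neg]
  rw [fderiv_fderiv_add (hF.contDiffAt z hz) hlin, hd]
  simp

lemma sub_inner (hF : IsRobinPotential R F) (w : E) :
    IsRobinPotential R (fun x => F x - ⟪w, x⟫) where
  radius_pos := hF.radius_pos
  contDiffAt z hz := (hF.contDiffAt z hz).sub (innerSL ℝ w).contDiff.contDiffAt
  hess_pos z hz v hv := by
    rw [hF.fderiv_fderiv_sub_inner w hz.le]
    exact hF.hess_pos z hz v hv
  robin z hz := by
    have h := (hF.differentiableAt hz.le).hasFDerivAt.sub (innerSL ℝ w).hasFDerivAt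
    rw [show (fun x => F x - ⟪w, x⟫) = F - innerSL ℝ w from rfl, h.fderiv, sub_apply,
      hF.robin z hz]
    rfl

variable [CompleteSpace E]

lemma fderiv_gradient_add_robinParaboloid (hF : IsRobinPotential R F) {ε : ℝ} (hε : 0 ≤ ε) {z : E}
    (hz : ‖z‖ ≤ R) : fderiv ℝ (∇ fun x => F x + robinParaboloid R ε x) z =
      fderiv ℝ (∇ F) z + ε • .id ℝ E := by
  refine ContinuousLinearMap.ext fun u => ext_inner_right ℝ fun v => ?_
  rw [inner_fderiv_gradient ((hF.add_robinParaboloid hε).differentiableAt_fderiv hz),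
    fderiv_fderiv_add (hF.contDiffAt z hz) (contDiff_robinParaboloid ε).contDiffAt,
    fderiv_fderiv_robinParaboloid, add_apply, add_apply, add_apply, inner_add_left,
    inner_fderiv_gradient (hF.differentiableAt_fderiv hz)]
  exact congrArg _ (real_inner_smul_left u v ε).symm

lemma fderiv_gradient_sub_inner (hF : IsRobinPotential R F) (w : E) {z : E} (hz : ‖z‖ ≤ R) :
    fderiv ℝ (∇ fun x => F x - ⟪w, x⟫) z = fderiv ℝ (∇ F) z := by
  refine ContinuousLinearMap.ext fun u => ext_inner_right ℝ fun v => ?_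
  rw [inner_fderiv_gradient ((hF.sub_inner w).differentiableAt_fderiv hz),
    hF.fderiv_fderiv_sub_inner w hz, inner_fderiv_gradient (hF.differentiableAt_fderiv hz)]

end IsRobinPotential

end Perturbation

/-! ### The upper bound -/

lemma exists_linearIsometry_single_eq {E ι : Type*} [NormedAddCommGroup E] [InnerProductSpace ℝ E]
    [Fintype ι] [DecidableEq ι] {v : ι → E} (hv : Orthonormal ℝ v) :
    ∃ J : EuclideanSpace ℝ ι →ₗᵢ[ℝ] E, ∀ i, J (EuclideanSpace.single i 1) = v i := by
  set b := (EuclideanSpace.basisFun ι ℝ).toBasis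
  have hb : ∀ i, b i = EuclideanSpace.single i 1 := fun i => by simp [b]
  have hJ : ∀ i, b.constr ℝ v (b i) = v i := b.constr_basis ℝ v
  exact ⟨(b.constr ℝ v).isometryOfOrthonormal (v := b)
    (by simp [b, (EuclideanSpace.basisFun ι ℝ).orthonormal])
    (by rwa [show b.constr ℝ v ∘ b = v from funext hJ]),
    fun i => by rw [← hb]; exact hJ i⟩

lemma sum_smul_mem_wulffShape {E ι : Type*} [NormedAddCommGroup E] [InnerProductSpace ℝ E]
    [Fintype ι] {R : ℝ} {f : E → ℝ} (hpos : ∀ w, ‖w‖ = R → 0 < f w) {p : ι → E}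
    (hp : ∀ i w, ‖w‖ = R → ⟪p i, w⟫ ≤ f w) {t : ι → ℝ} (ht : ∀ i, 0 ≤ t i) (ht1 : ∑ i, t i < 1) :
    ∑ i, t i • p i ∈ wulffShape R f := fun w hw => by
  calc ⟪∑ i, t i • p i, w⟫ = ∑ i, t i * ⟪p i, w⟫ := by simp [sum_inner, real_inner_smul_left]
    _ ≤ ∑ i, t i * f w :=
        Finset.sum_le_sum fun i _ => mul_le_mul_of_nonneg_left (hp i w hw) (ht i)
    _ = (∑ i, t i) * f w := (Finset.sum_mul ..).symm
    _ < f w := mul_lt_of_lt_one_left (hpos w hw) ht1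

lemma volume_wulffShape_le {E ι : Type*} [NormedAddCommGroup E] [InnerProductSpace ℝ E]
    [FiniteDimensional ℝ E] [MeasurableSpace E] [BorelSpace E] [Fintype ι] {R : ℝ} (hR : 0 < R)
    {F : E → ℝ} (b : OrthonormalBasis ι ℝ E) {c : ι → ℝ}
    (hc : ∀ i a, |a| = R → F (a • b i) ≤ R * c i) :
    volume (wulffShape R F) ≤ ∏ i, ENNReal.ofReal (2 * c i) := by
  calc volume (wulffShape R F) ≤ volume {x | ∀ i, ⟪b i, x⟫ ∈ Icc (-c i) (c i)} := by
        refine measure_mono fun x hx i => ?_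
        have hle : ∀ a, |a| = R → a * ⟪b i, x⟫ ≤ R * c i := fun a ha => by
          have := (hx (a • b i) (by rw [norm_smul, b.norm_eq_one, mul_one, norm_eq_abs, ha])).le
          rw [real_inner_smul_right, real_inner_comm] at this
          exact this.trans (hc i a ha)
        have h1 := hle R (abs_of_pos hR)
        have h2 := hle (-R) (by rw [abs_neg, abs_of_pos hR])
        constructor <;> nlinarith
    _ = ∏ i, ENNReal.ofReal (2 * c i) := by
        rw [volume_inner_mem_pi b fun i => measurableSet_Icc]
        simp [two_mul]

lemma prod_two_mul_add_le {k r : ℕ} {R ε : ℝ} (hR : 0 ≤ R) (hε : 0 ≤ ε) {a : Fin (k + r) → ℝ}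
    (ha : ∀ i, 0 ≤ a i) (hεa : ∀ i, ε ≤ a (Fin.castAdd r i)) (haε : ∀ i, a (Fin.natAdd k i) ≤ ε) :
    ∏ i, (2 * (a i + ε * R)) ≤
      (2 * (1 + R)) ^ (k + r) * (∏ i, a (Fin.castAdd r i)) * ε ^ r := by
  have hnonneg : ∀ i, 0 ≤ 2 * (a i + ε * R) := fun i => by
    have := ha i
    positivity
  rw [Fin.prod_univ_add]
  calc (∏ i : Fin k, 2 * (a (Fin.castAdd r i) + ε * R)) *
        ∏ i : Fin r, 2 * (a (Fin.natAdd k i) + ε * R)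
      ≤ (∏ i : Fin k, 2 * (1 + R) * a (Fin.castAdd r i)) * ∏ _i : Fin r, 2 * (1 + R) * ε := by
        refine mul_le_mul (Finset.prod_le_prod (fun i _ => hnonneg _) fun i _ => ?_)
          (Finset.prod_le_prod (fun i _ => hnonneg _) fun i _ => ?_)
          (Finset.prod_nonneg fun i _ => hnonneg _)
          (Finset.prod_nonneg fun i _ => mul_nonneg (by positivity) (ha _))
        · linarith [mul_le_mul_of_nonneg_right (hεa i) hR]
        · linarith [haε i]
    _ = _ := by
        simp only [Finset.prod_mul_distrib, Finset.prod_const, Finset.card_univ,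
          Fintype.card_fin, mul_pow, pow_add]
        ring

lemma le_max_one_prod {k : ℕ} [NeZero k] {ε : ℝ} {a : Fin k → ℝ} (h : ∀ i, ε ≤ a i) :
    ε ≤ max 1 (∏ i, a i) := by
  rcases le_or_gt ε 1 with h1 | h1
  · exact h1.trans (le_max_left _ _)
  · calc ε ≤ ε ^ k := le_self_pow₀ h1.le (NeZero.ne k)
      _ = ∏ _i : Fin k, ε := by simp
      _ ≤ ∏ i, a i := Finset.prod_le_prod (fun _ _ => by positivity) fun i _ => h i
      _ ≤ _ := le_max_right _ _

namespace IsRobinPotential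

variable {E : Type*} [NormedAddCommGroup E] [InnerProductSpace ℝ E] [FiniteDimensional ℝ E]
  {R D : ℝ} {f : E → ℝ}

lemma prod_inner_le_of_det_le [Nontrivial E] [MeasurableSpace E] [BorelSpace E]
    (hf : IsRobinPotential R f)
    (hpos : ∀ w, ‖w‖ = R → 0 < f w) {k : ℕ} (b : OrthonormalBasis (Fin k) ℝ E) {p : Fin k → E}
    (hp : ∀ i w, ‖w‖ = R → ⟪p i, w⟫ ≤ f w) (htri : ∀ i j, i < j → ⟪p i, b j⟫ = 0) (hD : 0 ≤ D)
    (hdet : ∀ z, ‖z‖ < R → |(fderiv ℝ (∇ f) z).det| ≤ D) :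
    ∏ i, ⟪p i, b i⟫ ≤ D * volume.real (Metric.ball (0 : E) R) * k ^ k := by
  have hsimplex : ENNReal.ofReal ((∏ i, ⟪p i, b i⟫) / k ^ k) ≤ volume (wulffShape R f) :=
    le_volume_of_simplex_subset b htri fun t ht ht1 =>
      sum_smul_mem_wulffShape hpos hp (fun i => (ht i).le) ht1
  have harea : volume (wulffShape R f) ≤ ENNReal.ofReal D * volume (Metric.ball (0 : E) R) := by
    rw [← hf.image_gradient_ball]
    exact hf.volume_image_gradient_le subset_rfl measurableSet_ball fun z hz =>
      hdet z (mem_ball_zero_iff.mp hz)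
  have hle := hsimplex.trans harea
  rw [← ofReal_measureReal measure_ball_lt_top.ne, ← ENNReal.ofReal_mul hD,
    ENNReal.ofReal_le_ofReal_iff (by positivity)] at hle
  rcases k.eq_zero_or_pos with rfl | hk
  · simpa using hle
  · rwa [div_le_iff₀ (by positivity)] at hle

lemma prod_inner_le_of_gram_le (hf : IsRobinPotential R f) (hpos : ∀ w, ‖w‖ = R → 0 < f w)
    {k : ℕ} [NeZero k] {v p : Fin k → E} (hv : Orthonormal ℝ v)
    (hp : ∀ i w, ‖w‖ = R → ⟪p i, w⟫ ≤ f w) (htri : ∀ i j, i < j → ⟪p i, v j⟫ = 0) (hD : 0 ≤ D)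
    (hgram : ∀ z, ‖z‖ < R →
      |(Matrix.of fun i j => fderiv ℝ (fderiv ℝ f) z (v i) (v j)).det| ≤ D) :
    ∏ i, ⟪p i, v i⟫ ≤
      D * volume.real (Metric.ball (0 : EuclideanSpace ℝ (Fin k)) R) * k ^ k := by
  obtain ⟨J, hJ⟩ := exists_linearIsometry_single_eq hv
  have hJf := hf.comp_linearIsometry J
  have hp' : ∀ i w, ⟪J.toContinuousLinearMap.adjoint (p i), w⟫ = ⟪p i, J w⟫ := fun i w =>
    ContinuousLinearMap.adjoint_inner_left _ _ _
  have hpv : ∀ i j, ⟪J.toContinuousLinearMap.adjoint (p i), EuclideanSpace.basisFun _ ℝ j⟫ =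
      ⟪p i, v j⟫ := fun i j => by rw [hp', EuclideanSpace.basisFun_apply, hJ]
  simp only [← hpv] at htri ⊢
  refine hJf.prod_inner_le_of_det_le (fun w hw => hpos _ (by rwa [J.norm_map])) _
    (fun i w hw => ?_) htri hD fun z hz => ?_
  · rw [hp']
    exact hp i _ (by rwa [J.norm_map])
  · rw [det_fderiv_gradient (EuclideanSpace.basisFun _ ℝ) (hJf.differentiableAt_fderiv hz.le)]
    rw [← J.norm_map] at hz
    refine (congrArg (|Matrix.det ·|) (Matrix.ext fun i j => ?_)).trans_le (hgram _ hz)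
    have := fderiv_fderiv_comp_add (L := J.toContinuousLinearMap) (c := 0)
      (by simpa using hf.contDiffAt _ hz.le) (EuclideanSpace.single i 1) (EuclideanSpace.single j 1)
    simpa [hJ] using this

variable {n : ℕ} {b : OrthonormalBasis (Fin n) ℝ E} {p : Fin n → E}

lemma exists_isGreedyFrame_gradient [Nontrivial E] (hf : IsRobinPotential R f)
    (hE : Module.finrank ℝ E = n) :
    ∃ (b : OrthonormalBasis (Fin n) ℝ E) (p : Fin n → E),
      IsGreedyFrame (∇ f '' Metric.sphere 0 R) b p := by
  have hcont : ContinuousOn (∇ f) (Metric.sphere 0 R) := fun z hz =>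
    (differentiableAt_gradient (hf.differentiableAt_fderiv
      (mem_sphere_zero_iff_norm.mp hz).le)).continuousAt.continuousWithinAt
  obtain ⟨b, p, h⟩ := IsGreedyFrame.exists_of_isCompact n hE _
    ((isCompact_sphere 0 R).image_of_continuousOn hcont)
    ((NormedSpace.sphere_nonempty.mpr hf.radius_pos.le).image _)
  obtain ⟨B, hB⟩ := exists_orthonormalBasis_apply_eq (by simpa using hE)
    (Function.Embedding.refl (Fin n)) h.orthonormal
  exact ⟨B, p, by rwa [show ⇑B = b from funext hB]⟩

lemma inner_le_of_isGreedyFrame (hf : IsRobinPotential R f)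
    (h : IsGreedyFrame (∇ f '' Metric.sphere 0 R) b p) (i : Fin n) {w : E} (hw : ‖w‖ = R) :
    ⟪p i, w⟫ ≤ f w := by
  obtain ⟨z, hz, hzp⟩ := h.mem i
  rw [← hzp, inner_gradient_left]
  exact hf.fderiv_le_of_sphere (mem_sphere_zero_iff_norm.mp hz) hw.le

lemma apply_smul_le_of_isGreedyFrame (hf : IsRobinPotential R f)
    (h : IsGreedyFrame (∇ f '' Metric.sphere 0 R) b p) (i : Fin n) {a : ℝ} (ha : |a| = R) :
    f (a • b i) ≤ R * ⟪p i, b i⟫ := by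
  have hw : ‖a • b i‖ = R := by rw [norm_smul, b.norm_eq_one, mul_one, norm_eq_abs, ha]
  rw [← hf.robin _ hw, ← inner_gradient_left, real_inner_smul_right, ← ha]
  refine (le_abs_self _).trans ?_
  rw [abs_mul]
  exact mul_le_mul_of_nonneg_left (h.abs_inner_le i i le_rfl _
    (mem_image_of_mem _ (mem_sphere_zero_iff_norm.mpr hw))) (abs_nonneg a)

lemma zero_le_of_isGreedyFrame (hf : IsRobinPotential R f)
    (h : IsGreedyFrame (∇ f '' Metric.sphere 0 R) b p) (i : Fin n) : f 0 ≤ R * ⟪p i, b i⟫ := by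
  have hR := abs_of_pos hf.radius_pos
  have h1 := hf.apply_smul_le_of_isGreedyFrame h i hR
  have h2 := hf.apply_smul_le_of_isGreedyFrame h i ((abs_neg R).trans hR)
  have h3 := hf.two_mul_zero_le (w := R • b i)
    (by rw [norm_smul, b.norm_eq_one, mul_one, norm_eq_abs, hR])
  rw [neg_smul] at h2
  linarith

lemma le_of_isGreedyFrame [NeZero n] (hf : IsRobinPotential R f)
    (h : IsGreedyFrame (∇ f '' Metric.sphere 0 R) b p) {z : E} (hz : ‖z‖ ≤ R) :
    f z ≤ (n + 1) * R * ⟪p 0, b 0⟫ := by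
  have : Nontrivial E := ⟨⟨0, b 0, (b.orthonormal.ne_zero 0).symm⟩⟩
  have hsphere : ∀ w, ‖w‖ = R → f w ≤ n * ⟪p 0, b 0⟫ * R := fun w hw => by
    rw [← hf.robin w hw, ← inner_gradient_left]
    refine (real_inner_le_norm _ _).trans ?_
    rw [hw]
    exact mul_le_mul_of_nonneg_right
      (h.norm_le (mem_image_of_mem _ (mem_sphere_zero_iff_norm.mpr hw))) hf.radius_pos.le
  linarith [hf.le_add_of_sphere_le hsphere hz, hf.zero_le_of_isGreedyFrame h 0]

lemma volume_wulffShape_add_robinParaboloid_le [MeasurableSpace E] [BorelSpace E] {k r : ℕ}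
    (hf : IsRobinPotential R f) {b : OrthonormalBasis (Fin (k + r)) ℝ E} {p : Fin (k + r) → E}
    (h : IsGreedyFrame (∇ f '' Metric.sphere 0 R) b p) {ε : ℝ} (hε : 0 ≤ ε)
    (hεa : ∀ i, ε ≤ ⟪p (Fin.castAdd r i), b (Fin.castAdd r i)⟫)
    (haε : ∀ i, ⟪p (Fin.natAdd k i), b (Fin.natAdd k i)⟫ ≤ ε) :
    volume (wulffShape R fun x => f x + robinParaboloid R ε x) ≤
      ENNReal.ofReal ((2 * (1 + R)) ^ (k + r) *
        (∏ i, ⟪p (Fin.castAdd r i), b (Fin.castAdd r i)⟫) * ε ^ r) := by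
  have ha : ∀ i, 0 ≤ ⟪p i, b i⟫ := fun i =>
    (abs_nonneg _).trans (h.abs_inner_le i i le_rfl _ (h.mem i))
  have hR := hf.radius_pos.le
  calc volume (wulffShape R fun x => f x + robinParaboloid R ε x)
      ≤ ∏ i, ENNReal.ofReal (2 * (⟪p i, b i⟫ + ε * R)) :=
        volume_wulffShape_le hf.radius_pos b fun i a ha => by
          rw [robinParaboloid_of_norm_eq ε
            (by rw [norm_smul, b.norm_eq_one, mul_one, norm_eq_abs, ha])]
          linarith [hf.apply_smul_le_of_isGreedyFrame h i ha]
    _ = ENNReal.ofReal (∏ i, 2 * (⟪p i, b i⟫ + ε * R)) :=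
        (ENNReal.ofReal_prod_of_nonneg fun i _ =>
          mul_nonneg zero_le_two (add_nonneg (ha i) (mul_nonneg hε hR))).symm
    _ ≤ _ := ENNReal.ofReal_le_ofReal (prod_two_mul_add_le hR hε ha hεa haε)

lemma inner_mul_le_of_isGreedyFrame [NeZero n] [MeasurableSpace E] [BorelSpace E]
    (hf : IsRobinPotential R f) (hpos : ∀ w, ‖w‖ = R → 0 < f w)
    (h : IsGreedyFrame (∇ f '' Metric.sphere 0 R) b p) {ε W d : ℝ} (hε : 0 ≤ ε) (hfε : f 0 ≤ R * ε)
    (hd0 : 0 ≤ d) (hd : ∀ z, ‖z‖ < R → d ≤ (fderiv ℝ (∇ f) z + ε • .id ℝ E).det) (hW0 : 0 ≤ W)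
    (hW : volume (wulffShape R fun x => f x + robinParaboloid R ε x) ≤ ENNReal.ofReal W) :
    ⟪p 0, b 0⟫ * (d * volume.real (Metric.ball (0 : E) (R / 4))) ≤ n * ((2 + R) * ε) * W := by
  have : Nontrivial E := ⟨⟨0, b 0, (b.orthonormal.ne_zero 0).symm⟩⟩
  have hE : Module.finrank ℝ E = n := by simpa using Module.finrank_eq_card_basis b.toBasis
  have hR := hf.radius_pos
  have hL : 0 < ⟪p 0, b 0⟫ :=
    pos_of_mul_pos_right ((hf.zero_pos).trans_le (hf.zero_le_of_isGreedyFrame h 0)) hR.le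
  have hpar : ∀ w : E, 0 ≤ robinParaboloid R ε w := fun w => by rw [robinParaboloid]; positivity
  have hshell := (hf.add_robinParaboloid hε).mul_volume_ball_le_of_le_det
    (fun w hw => add_pos_of_pos_of_nonneg (hpos w hw) (hpar w))
    (hW.trans_lt ENNReal.ofReal_lt_top).ne (b.norm_eq_one 0) hL
    (fun w hw => by
      rw [← real_inner_smul_left, ← h.apply_zero_eq]
      exact (hf.inner_le_of_isGreedyFrame h 0 hw).trans (le_add_of_nonneg_right (hpar w)))
    hd0 fun z hz => by rw [hf.fderiv_gradient_add_robinParaboloid hε hz.le]; exact hd z hz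
  have hF0 : 2 * (f 0 + robinParaboloid R ε (0 : E)) ≤ (2 + R) * ε * R := by
    rw [robinParaboloid, norm_zero]
    linarith
  rw [hE] at hshell
  rw [← le_div_iff₀' hL]
  calc d * volume.real (Metric.ball (0 : E) (R / 4))
      ≤ n * (2 * (f 0 + robinParaboloid R ε 0) / (⟪p 0, b 0⟫ * R)) *
          volume.real (wulffShape R fun x => f x + robinParaboloid R ε x) := hshell
    _ ≤ n * ((2 + R) * ε * R / (⟪p 0, b 0⟫ * R)) * W := by
        have := (hf.add_robinParaboloid hε).zero_pos.le
        gcongr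
        exact ENNReal.toReal_le_of_le_ofReal hW0 hW
    _ = n * ((2 + R) * ε) * W / ⟪p 0, b 0⟫ := by field_simp

/-- The paraboloid added to `f` has the size of the `k`-th width of the frame, so that the
remaining `r` widths contribute the factor `ε ^ r` to the volume of the Wulff shape, and cancel the
factor `ε ^ r` of the determinant. -/
lemma inner_mul_le_of_prod_le [MeasurableSpace E] [BorelSpace E] {k r : ℕ} [NeZero k]
    [NeZero (k + r)] (hf : IsRobinPotential R f) (hpos : ∀ w, ‖w‖ = R → 0 < f w)
    {b : OrthonormalBasis (Fin (k + r)) ℝ E} {p : Fin (k + r) → E}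
    (h : IsGreedyFrame (∇ f '' Metric.sphere 0 R) b p) {m A : ℝ} (hm : 0 ≤ m)
    (hdet : ∀ ε > 0, ∀ z, ‖z‖ < R → m * ε ^ r ≤ (fderiv ℝ (∇ f) z + ε • .id ℝ E).det)
    (hA : ∏ i, ⟪p (Fin.castAdd r i), b (Fin.castAdd r i)⟫ ≤ A) :
    ⟪p 0, b 0⟫ * (m * volume.real (Metric.ball (0 : E) (R / 4))) ≤
      (k + r : ℕ) * ((2 + R) * max 1 A) * ((2 * (1 + R)) ^ (k + r) * A) := by
  have : Nontrivial E := ⟨⟨0, b 0, (b.orthonormal.ne_zero 0).symm⟩⟩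
  have hR := hf.radius_pos
  set a : Fin (k + r) → ℝ := fun i => ⟪p i, b i⟫
  have hapos : ∀ i, 0 < a i := fun i =>
    pos_of_mul_pos_right ((hf.zero_pos).trans_le (hf.zero_le_of_isGreedyFrame h i)) hR.le
  set i₀ : Fin k := Fin.ofNat k (k - 1)
  set ε := a (Fin.castAdd r i₀)
  have hk := Nat.pos_of_ne_zero (NeZero.ne k)
  have hi₀ : (i₀ : ℕ) = k - 1 := Nat.mod_eq_of_lt (by omega)
  have hεa : ∀ i, ε ≤ a (Fin.castAdd r i) := fun i => h.antitone <| by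
    rw [Fin.le_def, Fin.val_castAdd, Fin.val_castAdd]
    omega
  have haε : ∀ i, a (Fin.natAdd k i) ≤ ε := fun i => h.antitone <| by
    rw [Fin.le_def, Fin.val_castAdd, Fin.val_natAdd]
    omega
  have hε : 0 < ε := hapos _
  have hA0 : 0 ≤ A := (Finset.prod_nonneg fun i _ => (hapos _).le).trans hA
  have hεA : ε ≤ max 1 A := (le_max_one_prod hεa).trans (max_le_max_left 1 hA)
  have hvol := (hf.volume_wulffShape_add_robinParaboloid_le h hε.le hεa haε).trans
    (ENNReal.ofReal_le_ofReal (mul_le_mul_of_nonneg_right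
      (mul_le_mul_of_nonneg_left hA (by positivity)) (by positivity)))
  have hmain := hf.inner_mul_le_of_isGreedyFrame hpos h hε.le (hf.zero_le_of_isGreedyFrame h _)
    (by positivity) (hdet ε hε) (by positivity) hvol
  refine le_of_mul_le_mul_right ?_ (pow_pos hε r)
  calc _ = ⟪p 0, b 0⟫ * (m * ε ^ r * volume.real (Metric.ball (0 : E) (R / 4))) := by ring
    _ ≤ (k + r : ℕ) * ((2 + R) * ε) * ((2 * (1 + R)) ^ (k + r) * A * ε ^ r) := hmain
    _ ≤ (k + r : ℕ) * ((2 + R) * max 1 A) * ((2 * (1 + R)) ^ (k + r) * A * ε ^ r) := by gcongr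
    _ = _ := by ring

theorem exists_upper_bound {k r : ℕ} [NeZero k] (hE : Module.finrank ℝ E = k + r) (hR : 0 < R)
    (hD : 0 ≤ D) {m : ℝ} (hm : 0 < m) :
    ∃ C, 0 < C ∧ ∀ f : E → ℝ, IsRobinPotential R f → (∀ w, ‖w‖ = R → 0 < f w) →
      (∀ v : Fin k → E, Orthonormal ℝ v → ∀ z, ‖z‖ < R →
        |(Matrix.of fun i j => fderiv ℝ (fderiv ℝ f) z (v i) (v j)).det| ≤ D) →
      (∀ ε > 0, ∀ z, ‖z‖ < R → m * ε ^ r ≤ (fderiv ℝ (∇ f) z + ε • .id ℝ E).det) →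
      ∀ z, ‖z‖ ≤ R → f z ≤ C := by
  let _ : MeasurableSpace E := borel E
  have : BorelSpace E := ⟨rfl⟩
  have : NeZero (k + r) := ⟨by have := NeZero.ne k; omega⟩
  have : Nontrivial E := Module.nontrivial_of_finrank_pos (R := ℝ) (hE ▸ Nat.pos_of_neZero (k + r))
  set A : ℝ := D * volume.real (Metric.ball (0 : EuclideanSpace ℝ (Fin k)) R) * k ^ k
  set β : ℝ := m * volume.real (Metric.ball (0 : E) (R / 4))
  have : 0 ≤ A := by positivity
  have hβ : 0 < β := mul_pos hm (ENNReal.toReal_pos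
    (Metric.measure_ball_pos volume _ (by positivity)).ne' measure_ball_lt_top.ne)
  set L : ℝ := (k + r : ℕ) * ((2 + R) * max 1 A) * ((2 * (1 + R)) ^ (k + r) * A) / β
  have : 0 ≤ L := by positivity
  refine ⟨((k + r : ℕ) + 1) * R * L + 1, by positivity, fun f hf hpos hgram hdet z hz => ?_⟩
  obtain ⟨b, p, h⟩ := hf.exists_isGreedyFrame_gradient hE
  have hprod : ∏ i, ⟪p (Fin.castAdd r i), b (Fin.castAdd r i)⟫ ≤ A :=
    have hv := h.orthonormal.comp (Fin.castAdd r) (Fin.castAdd_injective k r)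
    hf.prod_inner_le_of_gram_le hpos hv (fun i w hw => hf.inner_le_of_isGreedyFrame h _ hw)
      (fun i j hij => h.inner_eq_zero _ _ hij) hD (hgram _ hv)
  have hwidth : ⟪p 0, b 0⟫ ≤ L :=
    (le_div_iff₀ hβ).mpr (hf.inner_mul_le_of_prod_le hpos h hm.le hdet hprod)
  calc f z ≤ ((k + r : ℕ) + 1) * R * ⟪p 0, b 0⟫ := hf.le_of_isGreedyFrame h hz
    _ ≤ ((k + r : ℕ) + 1) * R * L := by gcongr
    _ ≤ _ := by linarith

end IsRobinPotential

/-! ### The lower bound -/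

section Centroid

lemma half_le_setAverage {α : Type*} [MeasurableSpace α] {μ : Measure α} {Q : Set α}
    (hQm : MeasurableSet Q) (hQ0 : 0 < μ.real Q) {g : α → ℝ} (hg : IntegrableOn g Q μ)
    (hg0 : ∀ x ∈ Q, 0 ≤ g x) {δ : ℝ} (hδ : 0 ≤ δ)
    (hhalf : μ.real Q ≤ 2 * μ.real {x ∈ Q | δ ≤ g x}) :
    δ / 2 ≤ ⨍ x in Q, g x ∂μ := by
  have hmarkov := mul_meas_ge_le_integral_of_nonneg (μ := μ.restrict Q)
    ((ae_restrict_mem hQm).mono hg0) hg δ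
  rw [measureReal_restrict_apply' hQm, inter_comm] at hmarkov
  rw [setAverage_eq, smul_eq_mul, ← div_eq_inv_mul, le_div_iff₀ hQ0]
  calc δ / 2 * μ.real Q ≤ δ / 2 * (2 * μ.real {x ∈ Q | δ ≤ g x}) := by gcongr
    _ = δ * μ.real {x ∈ Q | δ ≤ g x} := by ring
    _ ≤ _ := hmarkov

variable {E : Type*} [NormedAddCommGroup E] [InnerProductSpace ℝ E] [FiniteDimensional ℝ E]
  [MeasurableSpace E] [BorelSpace E] [Nontrivial E]

lemma measureReal_le_two_mul_of_subset_closedBall {ρ : ℝ} (hρ : 0 < ρ) {Q : Set E}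
    (hQ : Q ⊆ Metric.closedBall 0 ρ) {e : E} (he : ‖e‖ = 1) {h : ℝ} (hle : ∀ p ∈ Q, ⟪e, p⟫ ≤ h)
    {δ : ℝ} (hδ : 0 ≤ δ) (hδQ : 2 * δ * (2 * ρ) ^ (Module.finrank ℝ E - 1) ≤ volume.real Q) :
    volume.real Q ≤ 2 * volume.real {p ∈ Q | δ ≤ h - ⟪e, p⟫} := by
  have hball : volume (Metric.closedBall (0 : E) ρ) ≠ ⊤ :=
    (isCompact_closedBall _ ρ).measure_lt_top.ne
  set S : Set E := {p | ‖p‖ ≤ ρ ∧ ⟪e, p⟫ ∈ Icc (h - δ) h}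
  have hS : S ⊆ Metric.closedBall 0 ρ := fun p hp => mem_closedBall_zero_iff.mpr hp.1
  have hslab : volume.real S ≤ δ * (2 * ρ) ^ (Module.finrank ℝ E - 1) := by
    refine (ENNReal.toReal_mono (by finiteness)
      (volume_closedBall_inter_slab_le he ρ h δ)).trans_eq ?_
    rw [ENNReal.toReal_mul, ENNReal.toReal_pow, ENNReal.toReal_ofReal hδ,
      ENNReal.toReal_ofReal (by positivity)]
  have hcover : Q ⊆ {p ∈ Q | δ ≤ h - ⟪e, p⟫} ∪ S := fun p hp => by
    by_cases hp' : δ ≤ h - ⟪e, p⟫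
    · exact Or.inl ⟨hp, hp'⟩
    · exact Or.inr ⟨mem_closedBall_zero_iff.mp (hQ hp), by linarith, hle p hp⟩
  linarith [(measureReal_mono hcover (measure_ne_top_of_subset
    (union_subset ((sep_subset _ _).trans hQ) hS) hball)).trans (measureReal_union_le _ _)]

lemma exists_forall_half_le_sub_inner {ρ : ℝ} (hρ : 0 < ρ) {Q : Set E} (hQm : MeasurableSet Q)
    (hQ : Q ⊆ Metric.closedBall 0 ρ) {δ : ℝ} (hδ : 0 < δ)
    (hδQ : 2 * δ * (2 * ρ) ^ (Module.finrank ℝ E - 1) ≤ volume.real Q) :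
    ∃ w : E, ‖w‖ ≤ ρ ∧ ∀ e h, ‖e‖ = 1 → (∀ p ∈ Q, ⟪e, p⟫ ≤ h) → δ / 2 ≤ h - ⟪e, w⟫ := by
  have hfin : volume Q ≠ ⊤ :=
    measure_ne_top_of_subset hQ (isCompact_closedBall _ ρ).measure_lt_top.ne
  have hvol : 0 < volume.real Q := lt_of_lt_of_le (by positivity) hδQ
  have h0 : volume Q ≠ 0 := (ENNReal.toReal_pos_iff.mp hvol).1.ne'
  have hint : IntegrableOn (fun p : E => p) Q volume :=
    (continuousOn_id.integrableOn_compact (isCompact_closedBall _ ρ)).mono_set hQ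
  refine ⟨⨍ p in Q, p, ?_, fun e h he hle => ?_⟩
  · exact mem_closedBall_zero_iff.mp ((convex_closedBall 0 ρ).set_average_mem
      Metric.isClosed_closedBall h0 hfin ((ae_restrict_mem hQm).mono fun p hp => hQ hp) hint)
  · have hinte : IntegrableOn (fun p => ⟪e, p⟫) Q volume := hint.const_inner e
    have hintc : IntegrableOn (fun _ => h) Q volume := integrableOn_const hfin
    have haverage : ⨍ p in Q, (h - ⟪e, p⟫) = h - ⟪e, ⨍ p in Q, p⟫ := by
      rw [setAverage_eq, setAverage_eq, integral_sub hintc hinte, setIntegral_const,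
        integral_inner hint, inner_smul_right, smul_eq_mul, smul_eq_mul, mul_sub,
        inv_mul_cancel_left₀ hvol.ne']
    exact haverage ▸ half_le_setAverage hQm hvol (hintc.sub hinte)
      (fun p hp => sub_nonneg.mpr (hle p hp)) hδ.le
      (measureReal_le_two_mul_of_subset_closedBall hρ hQ he hle hδ.le hδQ)

end Centroid

lemma wulffShape_subset_closedBall {E : Type*} [NormedAddCommGroup E] [InnerProductSpace ℝ E]
    [Nontrivial E] {R C : ℝ} {F : E → ℝ} (hR : 0 < R) (hC : ∀ w, ‖w‖ = R → F w ≤ C) :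
    wulffShape R F ⊆ Metric.closedBall 0 (C / R) := fun p hp => by
  obtain ⟨b, hb, hpb⟩ := exists_norm_eq_one_smul_eq p
  have hw : ‖R • b‖ = R := by rw [norm_smul, hb, mul_one, norm_of_nonneg hR.le]
  have h := (hp _ hw).le.trans (hC _ hw)
  rw [← hpb, real_inner_smul_left, real_inner_smul_right, real_inner_self_eq_norm_sq, hb] at h
  rw [mem_closedBall_zero_iff, le_div_iff₀ hR]
  linarith

namespace IsRobinPotential

variable {E : Type*} [NormedAddCommGroup E] [InnerProductSpace ℝ E] [Nontrivial E]
  {R : ℝ} {F : E → ℝ}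

lemma mul_le_add_mul (hF : IsRobinPotential R F) {δ C : ℝ} (hδ : ∀ w, ‖w‖ = R → δ ≤ F w)
    (hδ0 : 0 ≤ δ) (hC : ∀ w, ‖w‖ = R → F w ≤ C) {z : E} (hz : ‖z‖ ≤ R) :
    δ * F 0 ≤ (δ + C) * F z := by
  have hR := hF.radius_pos
  obtain ⟨w, hw, t, ht, rfl⟩ := exists_smul_eq_of_norm_le hR hz
  have hC0 : 0 ≤ C := hδ0.trans ((hδ w hw).trans (hC w hw))
  have hradial : t * δ ≤ F (t • w) :=
    (mul_le_mul_of_nonneg_left (hδ w hw) ht.1).trans (hF.smul_le hw ht)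
  have hslope : fderiv ℝ F 0 (-w) ≤ C :=
    (hF.fderiv_le_of_norm_le hF.norm_zero_le ((norm_neg w).trans hw)).trans
      (hC _ ((norm_neg w).trans hw))
  have htangent : F 0 - t * C ≤ F (t • w) := by
    have h := hF.add_fderiv_sub_le hF.norm_zero_le hz
    rw [sub_zero, map_smul, smul_eq_mul] at h
    rw [map_neg] at hslope
    linarith [mul_le_mul_of_nonneg_left hslope ht.1]
  linarith [mul_le_mul_of_nonneg_left hradial hC0, mul_le_mul_of_nonneg_left htangent hδ0]

variable [FiniteDimensional ℝ E] [MeasurableSpace E] [BorelSpace E]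

lemma mul_volume_ball_mul_le (hF : IsRobinPotential R F) {δ C d : ℝ}
    (hδ : ∀ w, ‖w‖ = R → δ ≤ F w) (hδ0 : 0 < δ) (hC : ∀ w, ‖w‖ = R → F w ≤ C) (hd0 : 0 ≤ d)
    (hd : ∀ z, ‖z‖ < R → d ≤ (fderiv ℝ (∇ F) z).det) :
    d * volume.real (Metric.ball (0 : E) (R / 4)) * δ ≤
      Module.finrank ℝ E * (2 * F 0) * volume.real (Metric.closedBall (0 : E) (C / R)) := by
  have hR := hF.radius_pos
  have hfin : volume (Metric.closedBall (0 : E) (C / R)) ≠ ⊤ :=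
    (isCompact_closedBall _ _).measure_lt_top.ne
  have hsub := wulffShape_subset_closedBall hR hC
  obtain ⟨e, he⟩ := exists_norm_eq E zero_le_one
  have hshell := hF.mul_volume_ball_le_of_le_det (fun w hw => hδ0.trans_le (hδ w hw))
    (measure_ne_top_of_subset hsub hfin) he (div_pos hδ0 hR) (fun w hw => by
      have := real_inner_le_norm e w
      rw [he, hw, one_mul] at this
      calc δ / R * ⟪e, w⟫ ≤ δ / R * R := by gcongr
        _ = δ := div_mul_cancel₀ _ hR.ne'
        _ ≤ F w := hδ w hw) hd0 hd
  rw [div_mul_cancel₀ _ hR.ne'] at hshell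
  rw [← le_div_iff₀ hδ0]
  calc d * volume.real (Metric.ball (0 : E) (R / 4))
      ≤ Module.finrank ℝ E * (2 * F 0 / δ) * volume.real (wulffShape R F) := hshell
    _ ≤ Module.finrank ℝ E * (2 * F 0 / δ) * volume.real (Metric.closedBall (0 : E) (C / R)) := by
        have := hF.zero_pos
        gcongr
    _ = _ := by ring

lemma exists_forall_sphere_le_sub_inner (hF : IsRobinPotential R F) {C δ d : ℝ} (hC0 : 0 < C)
    (hC : ∀ w, ‖w‖ = R → F w ≤ C) (hd0 : 0 ≤ d)
    (hd : ∀ z, ‖z‖ < R → d ≤ (fderiv ℝ (∇ F) z).det) (hδ : 0 < δ)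
    (hδd : 2 * δ * (2 * (C / R)) ^ (Module.finrank ℝ E - 1) ≤
      d * volume.real (Metric.ball (0 : E) R)) :
    ∃ w : E, ‖w‖ ≤ C / R ∧ ∀ y, ‖y‖ = R → R * (δ / 2) ≤ F y - ⟪w, y⟫ := by
  have hR := hF.radius_pos
  have hsub := wulffShape_subset_closedBall hR hC
  have hmeas : MeasurableSet (wulffShape R F) :=
    hF.image_gradient_ball ▸ hF.measurableSet_image_gradient subset_rfl measurableSet_ball
  have hvol : d * volume.real (Metric.ball (0 : E) R) ≤ volume.real (wulffShape R F) := by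
    have h := hF.le_volume_image_gradient subset_rfl measurableSet_ball fun z hz =>
      hd z (mem_ball_zero_iff.mp hz)
    rw [hF.image_gradient_ball] at h
    simpa only [measureReal_def, ENNReal.toReal_mul, ENNReal.toReal_ofReal hd0] using
      ENNReal.toReal_mono (measure_ne_top_of_subset hsub
        (isCompact_closedBall _ _).measure_lt_top.ne) h
  obtain ⟨w, hwC, hw⟩ :=
    exists_forall_half_le_sub_inner (div_pos hC0 hR) hmeas hsub hδ (hδd.trans hvol)
  refine ⟨w, hwC, fun y hy => ?_⟩
  have h := hw (R⁻¹ • y) (R⁻¹ * F y)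
    (by rw [norm_smul, norm_inv, norm_of_nonneg hR.le, hy, inv_mul_cancel₀ hR.ne'])
    fun p hp => by
      rw [real_inner_smul_left, real_inner_comm]
      exact mul_le_mul_of_nonneg_left (hp y hy).le (inv_nonneg.mpr hR.le)
  rwa [real_inner_smul_left, real_inner_comm, ← mul_sub, ← div_eq_inv_mul, le_div_iff₀' hR] at h

end IsRobinPotential

lemma neg_inner_le_of_norm_le_div {E : Type*} [NormedAddCommGroup E] [InnerProductSpace ℝ E]
    {R C : ℝ} {w z : E} (hR : 0 < R) (hw : ‖w‖ ≤ C / R) (hz : ‖z‖ ≤ R) : -⟪w, z⟫ ≤ C :=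
  calc -⟪w, z⟫ ≤ ‖w‖ * ‖z‖ := (neg_le_abs _).trans (abs_real_inner_le_norm w z)
    _ ≤ C / R * R := mul_le_mul hw hz (norm_nonneg z) ((norm_nonneg w).trans hw)
    _ = C := div_mul_cancel₀ C hR.ne'

theorem IsRobinPotential.exists_lower_bound {E : Type*} [NormedAddCommGroup E]
    [InnerProductSpace ℝ E] [FiniteDimensional ℝ E] [Nontrivial E] {R C d : ℝ} (hR : 0 < R)
    (hC : 0 < C) (hd0 : 0 < d) :
    ∃ c, 0 < c ∧ ∀ F : E → ℝ, IsRobinPotential R F → (∀ z, ‖z‖ ≤ R → F z ≤ C) →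
      (∀ z, ‖z‖ < R → d ≤ (fderiv ℝ (∇ F) z).det) →
      ∃ w : E, ‖w‖ ≤ C / R ∧ ∀ z, ‖z‖ ≤ R → c ≤ F z - ⟪w, z⟫ := by
  let _ : MeasurableSpace E := borel E
  have : BorelSpace E := ⟨rfl⟩
  have hball : ∀ r > 0, 0 < volume.real (Metric.ball (0 : E) r) := fun r hr =>
    ENNReal.toReal_pos (Metric.measure_ball_pos volume _ hr).ne' measure_ball_lt_top.ne
  set W := volume.real (Metric.closedBall (0 : E) (2 * C / R))
  have hW : 0 < W := (hball (2 * C / R) (by positivity)).trans_le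
    (measureReal_mono Metric.ball_subset_closedBall (isCompact_closedBall _ _).measure_lt_top.ne)
  set δ := d * volume.real (Metric.ball (0 : E) R) /
    (2 * (2 * (C / R)) ^ (Module.finrank ℝ E - 1)) with hδ_def
  have hδ : 0 < δ := div_pos (mul_pos hd0 (hball R hR)) (by positivity)
  set β := d * volume.real (Metric.ball (0 : E) (R / 4))
  have hβ : 0 < β := mul_pos hd0 (hball _ (by positivity))
  have hE : (0 : ℝ) < Module.finrank ℝ E := by exact_mod_cast Module.finrank_pos
  set η := R * (δ / 2)
  set T := β * η / (Module.finrank ℝ E * 2 * W)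
  refine ⟨η * T / (η + 2 * C), by positivity, fun F hF hFC hdet => ?_⟩
  obtain ⟨w, hwC, hw⟩ := hF.exists_forall_sphere_le_sub_inner hC (fun y hy => hFC y hy.le)
    hd0.le hdet hδ (by rw [hδ_def]; field_simp; rfl)
  have hFw := hF.sub_inner w
  have hbound : ∀ y, ‖y‖ = R → F y - ⟪w, y⟫ ≤ 2 * C := fun y hy => by
    linarith [hFC y hy.le, neg_inner_le_of_norm_le_div hR hwC hy.le]
  have hT : T ≤ F 0 - ⟪w, 0⟫ := by
    have hshell : β * η ≤ Module.finrank ℝ E * (2 * (F 0 - ⟪w, 0⟫)) * W :=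
      hFw.mul_volume_ball_mul_le hw (by positivity) hbound hd0.le fun z hz => by
        rw [hF.fderiv_gradient_sub_inner w hz.le]
        exact hdet z hz
    rw [div_le_iff₀ (by positivity)]
    linarith
  refine ⟨w, hwC, fun z hz => ?_⟩
  rw [div_le_iff₀' (by positivity)]
  exact (mul_le_mul_of_nonneg_left hT (by positivity)).trans
    (hFw.mul_le_add_mul hw (by positivity) hbound hz)

/-! ### Positively homogeneous functions -/

section Homogeneous

variable {E : Type*} [NormedAddCommGroup E] [NormedSpace ℝ E] {G : E → ℝ} {x : E}

lemma fderiv_apply_self_of_homogeneous (hd : DifferentiableAt ℝ G x)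
    (hG : ∀ l : ℝ, 0 < l → G (l • x) = l * G x) : fderiv ℝ G x x = G x := by
  have hline : HasDerivAt (fun t : ℝ => G (x + t • x)) (fderiv ℝ G x x) 0 :=
    hd.hasFDerivAt.hasLineDerivAt x
  have hlinear : HasDerivAt (fun t : ℝ => (1 + t) * G x) (G x) 0 := by
    simpa using ((hasDerivAt_id (0 : ℝ)).const_add 1).mul_const (G x)
  refine hline.unique (hlinear.congr_of_eventuallyEq ?_)
  filter_upwards [eventually_gt_nhds (neg_one_lt_zero (R := ℝ))] with t ht
  rw [← hG (1 + t) (by linarith), add_smul, one_smul]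

lemma fderiv_fderiv_apply_self_self_of_homogeneous
    (hd : ∀ l : ℝ, 0 < l → DifferentiableAt ℝ G (l • x))
    (hd' : DifferentiableAt ℝ (fderiv ℝ G) x)
    (hG : ∀ l : ℝ, 0 < l → G (l • x) = l * G x) : fderiv ℝ (fderiv ℝ G) x x x = 0 := by
  have hline : HasDerivAt (fun t : ℝ => fderiv ℝ G (x + t • x) x)
      (fderiv ℝ (fderiv ℝ G) x x x) 0 :=
    (ContinuousLinearMap.apply ℝ ℝ x).hasFDerivAt.comp_hasDerivAt (0 : ℝ)
      (hd'.hasFDerivAt.hasLineDerivAt x)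
  refine hline.unique ((hasDerivAt_const (0 : ℝ) (G x)).congr_of_eventuallyEq ?_)
  filter_upwards [eventually_gt_nhds (neg_one_lt_zero (R := ℝ))] with t ht
  have ht' : 0 < 1 + t := by linarith
  have hEuler : fderiv ℝ G ((1 + t) • x) ((1 + t) • x) = G ((1 + t) • x) :=
    fderiv_apply_self_of_homogeneous (hd _ ht') fun l hl => by
      rw [smul_smul, hG _ (mul_pos hl ht'), hG _ ht', mul_assoc]
  rw [map_smul, hG _ ht', smul_eq_mul] at hEuler
  rw [← mul_left_cancel₀ ht'.ne' hEuler, add_smul, one_smul]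

lemma fderiv_smul_of_homogeneous {l : ℝ} (hl : l ≠ 0)
    (hG : ∀ᶠ y in nhds x, G (l • y) = l * G y) : fderiv ℝ G (l • x) = fderiv ℝ G x := by
  have hscaled : fderiv ℝ (fun y => G (l • y)) x = fderiv ℝ (fun y => l • G y) x :=
    Filter.EventuallyEq.fderiv_eq hG
  rw [fderiv_comp_smul, ← Pi.smul_def, fderiv_const_smul_field] at hscaled
  exact smul_right_injective _ hl hscaled

lemma fderiv_fderiv_of_homogeneous {l : ℝ} (hl : l ≠ 0)
    (hG : ∀ᶠ y in nhds x, G (l • y) = l * G y) :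
    fderiv ℝ (fderiv ℝ G) x = l • fderiv ℝ (fderiv ℝ G) (l • x) := by
  have hfderiv : fderiv ℝ G =ᶠ[nhds x] fun y => fderiv ℝ G (l • y) :=
    (eventually_eventually_nhds.mpr hG).mono fun y hy => (fderiv_smul_of_homogeneous hl hy).symm
  rw [hfderiv.fderiv_eq, fderiv_comp_smul]

end Homogeneous

/-! ### Spherical caps and their cones -/

section CapGeometry

variable {n : ℕ} {θ : ℝ}

/-- The inclusion of `ℝⁿ` in `ℝⁿ⁺¹` as the horizontal hyperplane `x_{n+1} = 0`. -/
def horizEmb (n : ℕ) : EuclideanSpace ℝ (Fin n) →ₗᵢ[ℝ] V n where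
  toFun z := WithLp.toLp 2 (Fin.snoc (α := fun _ => ℝ) z.ofLp 0)
  map_add' z w := by
    ext i
    refine Fin.lastCases ?_ (fun j => ?_) i <;> simp
  map_smul' t z := by
    ext i
    refine Fin.lastCases ?_ (fun j => ?_) i <;> simp
  norm_map' z := by
    simp [EuclideanSpace.norm_eq, Fin.sum_univ_castSucc]

@[simp] lemma horizEmb_castSucc (z : EuclideanSpace ℝ (Fin n)) (i : Fin n) :
    horizEmb n z i.castSucc = z i := by
  simp [horizEmb]

@[simp] lemma horizEmb_last (z : EuclideanSpace ℝ (Fin n)) :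
    horizEmb n z (Fin.last n) = 0 := by
  simp [horizEmb]

lemma horizEmb_single (i : Fin n) :
    horizEmb n (EuclideanSpace.single i 1) = EuclideanSpace.single i.castSucc 1 := by
  ext j
  refine Fin.lastCases ?_ (fun j => ?_) j
  · simp [(Fin.castSucc_lt_last i).ne']
  · simp

/-- The orthogonal projection of `ℝⁿ⁺¹` onto its first `n` coordinates. -/
def horizPart (n : ℕ) (x : V n) : EuclideanSpace ℝ (Fin n) :=
  WithLp.toLp 2 fun i => x i.castSucc

lemma horizEmb_horizPart_add (x : V n) :
    horizEmb n (horizPart n x) + x (Fin.last n) • Etop n = x := by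
  ext i
  refine Fin.lastCases ?_ (fun j => ?_) i
  · simp [Etop]
  · simp [Etop, horizPart]

@[simp] lemma Etop_last : Etop n (Fin.last n) = 1 := by simp [Etop]

@[simp] lemma norm_Etop : ‖Etop n‖ = 1 := by simp [Etop]

@[simp] lemma inner_horizEmb_Etop (z : EuclideanSpace ℝ (Fin n)) :
    ⟪horizEmb n z, Etop n⟫ = 0 := by
  simp [Etop, EuclideanSpace.inner_single_right]

lemma inner_horizEmb_add_smul_Etop (w : EuclideanSpace ℝ (Fin n)) (x : V n) (a : ℝ) :
    ⟪horizEmb n w, x + a • Etop n⟫ = ⟪horizEmb n w, x⟫ := by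
  rw [inner_add_right, inner_smul_right, inner_horizEmb_Etop, mul_zero, add_zero]

lemma norm_sq_horizEmb_add (z : EuclideanSpace ℝ (Fin n)) (a : ℝ) :
    ‖horizEmb n z + a • Etop n‖ ^ 2 = ‖z‖ ^ 2 + a ^ 2 := by
  rw [norm_add_sq_real, inner_smul_right, inner_horizEmb_Etop, norm_smul, norm_Etop,
    LinearIsometry.norm_map]
  simp

lemma add_smul_Etop_mem_sphCap {ζ : V n} (hζ : ζ ∈ capCap n θ) :
    ζ + cos θ • Etop n ∈ sphCap n θ :=
  ⟨hζ.2, by simpa using hζ.1⟩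

lemma sub_smul_Etop_mem_capCap {u : V n} (hu : u ∈ sphCap n θ) :
    u - cos θ • Etop n ∈ capCap n θ :=
  ⟨by simpa using hu.2, by simpa using hu.1⟩

lemma mem_coneCap_iff {x : V n} : x ∈ coneCap n θ ↔ x ≠ 0 ∧ ‖x‖ * cos θ ≤ x (Fin.last n) := by
  constructor
  · rintro ⟨l, hl, u, hu, rfl⟩
    have hu0 : u ≠ 0 := norm_ne_zero_iff.mp (by rw [hu.1]; exact one_ne_zero)
    refine ⟨smul_ne_zero hl.ne' hu0, ?_⟩
    rw [norm_smul, hu.1, norm_of_nonneg hl.le, mul_one]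
    exact mul_le_mul_of_nonneg_left hu.2 hl.le
  · rintro ⟨h0, hx⟩
    have hnorm : 0 < ‖x‖ := norm_pos_iff.mpr h0
    refine ⟨‖x‖, hnorm, ‖x‖⁻¹ • x, ⟨norm_smul_inv_norm h0, ?_⟩, ?_⟩
    · rwa [PiLp.smul_apply, smul_eq_mul, ← div_eq_inv_mul, le_div_iff₀ hnorm, mul_comm]
    · rw [smul_smul, mul_inv_cancel₀ hnorm.ne', one_smul]

lemma smul_mem_coneCap {x : V n} (hx : x ∈ coneCap n θ) {l : ℝ} (hl : 0 < l) :
    l • x ∈ coneCap n θ := by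
  obtain ⟨a, ha, u, hu, rfl⟩ := hx
  exact ⟨l * a, mul_pos hl ha, u, hu, smul_smul _ _ _⟩

lemma sphCap_subset_coneCap : sphCap n θ ⊆ coneCap n θ :=
  fun u hu => ⟨1, one_pos, u, hu, (one_smul _ _).symm⟩

lemma coneCap_mem_nhds {x : V n} (h0 : x ≠ 0) (hx : ‖x‖ * cos θ < x (Fin.last n)) :
    coneCap n θ ∈ nhds x := by
  filter_upwards [isOpen_ne.mem_nhds h0, (isOpen_lt (f := fun y : V n => ‖y‖ * cos θ)
    (g := fun y => y (Fin.last n)) (by fun_prop) (by fun_prop)).mem_nhds hx] with y hy0 hy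
  exact mem_coneCap_iff.mpr ⟨hy0, hy.le⟩

lemma sphCap_nonempty : (sphCap n θ).Nonempty :=
  ⟨Etop n, norm_Etop, by simpa using cos_le_one θ⟩

lemma capCap_nonempty : (capCap n θ).Nonempty :=
  sphCap_nonempty.elim fun _ hu => ⟨_, sub_smul_Etop_mem_capCap hu⟩

lemma isClosed_capCap : IsClosed (capCap n θ) :=
  (isClosed_le (f := fun _ => 0) (g := fun ζ : V n => ζ (Fin.last n)) (by fun_prop)
    (by fun_prop)).inter
    (isClosed_eq (f := fun ζ : V n => ‖ζ + cos θ • Etop n‖) (g := fun _ => 1) (by fun_prop)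
      (by fun_prop))

lemma isCompact_capCap : IsCompact (capCap n θ) := by
  refine (isCompact_closedBall (-(cos θ • Etop n)) 1).of_isClosed_subset isClosed_capCap
    fun ζ hζ => ?_
  rw [mem_closedBall_iff_norm, sub_neg_eq_add, hζ.2]

lemma cos_pos_of_mem_Ioo_zero (hθ : θ ∈ Ioo 0 (π / 2)) : 0 < cos θ :=
  cos_pos_of_mem_Ioo ⟨by linarith [hθ.1, pi_pos], hθ.2⟩

lemma sin_pos_of_mem_Ioo_zero (hθ : θ ∈ Ioo 0 (π / 2)) : 0 < sin θ :=
  sin_pos_of_mem_Ioo ⟨hθ.1, by linarith [hθ.2, pi_pos]⟩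

/-- The point above `z` in the horizontal hyperplane at height `cos θ`; the cone over `S^n_θ` meets
this hyperplane in the disc `‖z‖ ≤ sin θ` (gnomonic coordinates on the cap). -/
def slicePt (n : ℕ) (θ : ℝ) (z : EuclideanSpace ℝ (Fin n)) : V n :=
  horizEmb n z + cos θ • Etop n

@[simp] lemma slicePt_last (z : EuclideanSpace ℝ (Fin n)) :
    slicePt n θ z (Fin.last n) = cos θ := by
  simp [slicePt]

lemma contDiff_slicePt {r : WithTop ℕ∞} : ContDiff ℝ r (slicePt n θ) :=
  (horizEmb n).toContinuousLinearMap.contDiff.add contDiff_const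

lemma norm_sq_slicePt (z : EuclideanSpace ℝ (Fin n)) :
    ‖slicePt n θ z‖ ^ 2 = ‖z‖ ^ 2 + cos θ ^ 2 :=
  norm_sq_horizEmb_add z _

lemma norm_slicePt_le_one_iff (hs : 0 ≤ sin θ) {z : EuclideanSpace ℝ (Fin n)} :
    ‖slicePt n θ z‖ ≤ 1 ↔ ‖z‖ ≤ sin θ := by
  rw [← sq_le_one_iff₀ (norm_nonneg _), norm_sq_slicePt, ← sq_le_sq₀ (norm_nonneg z) hs, sin_sq,
    le_sub_iff_add_le]

lemma norm_slicePt_lt_one_iff (hs : 0 ≤ sin θ) {z : EuclideanSpace ℝ (Fin n)} :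
    ‖slicePt n θ z‖ < 1 ↔ ‖z‖ < sin θ := by
  rw [← sq_lt_one_iff₀ (norm_nonneg _), norm_sq_slicePt, ← sq_lt_sq₀ (norm_nonneg z) hs, sin_sq,
    lt_sub_iff_add_lt]

lemma slicePt_ne_zero (hc : 0 < cos θ) (z : EuclideanSpace ℝ (Fin n)) : slicePt n θ z ≠ 0 :=
  fun h => hc.ne' (by rw [← slicePt_last z, h, PiLp.zero_apply])

lemma cos_le_norm_slicePt (z : EuclideanSpace ℝ (Fin n)) : cos θ ≤ ‖slicePt n θ z‖ := by
  refine le_of_sq_le_sq ?_ (norm_nonneg _)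
  rw [norm_sq_slicePt]
  exact le_add_of_nonneg_left (sq_nonneg _)

lemma slicePt_mem_sphCapBdry {z : EuclideanSpace ℝ (Fin n)} (hz : ‖z‖ = sin θ) :
    slicePt n θ z ∈ sphCapBdry n θ := by
  refine ⟨(pow_eq_one_iff_of_nonneg (norm_nonneg _) two_ne_zero).mp ?_, slicePt_last z⟩
  rw [norm_sq_slicePt, hz, sin_sq_add_cos_sq]

lemma slicePt_mem_coneCap (hθ : θ ∈ Ioo 0 (π / 2)) {z : EuclideanSpace ℝ (Fin n)}
    (hz : ‖z‖ ≤ sin θ) : slicePt n θ z ∈ coneCap n θ := by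
  have hc := cos_pos_of_mem_Ioo_zero hθ
  have hnorm := (norm_slicePt_le_one_iff (sin_pos_of_mem_Ioo_zero hθ).le).mpr hz
  rw [mem_coneCap_iff, slicePt_last]
  exact ⟨slicePt_ne_zero hc z, mul_le_of_le_one_left hc.le hnorm⟩

lemma coneCap_mem_nhds_slicePt (hθ : θ ∈ Ioo 0 (π / 2)) {z : EuclideanSpace ℝ (Fin n)}
    (hz : ‖z‖ < sin θ) : coneCap n θ ∈ nhds (slicePt n θ z) := by
  have hc := cos_pos_of_mem_Ioo_zero hθ
  refine coneCap_mem_nhds (slicePt_ne_zero hc z) ?_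
  rw [slicePt_last]
  exact mul_lt_of_lt_one_left hc ((norm_slicePt_lt_one_iff (sin_pos_of_mem_Ioo_zero hθ).le).mpr hz)

lemma exists_eq_smul_slicePt (hθ : θ ∈ Ioo 0 (π / 2)) {u : V n} (hu : u ∈ sphCap n θ) :
    ∃ l z, 1 ≤ l ∧ l ≤ (cos θ)⁻¹ ∧ ‖z‖ ≤ sin θ ∧ u = l • slicePt n θ z := by
  have hc := cos_pos_of_mem_Ioo_zero hθ
  have hlast : 0 < u (Fin.last n) := hc.trans_le hu.2
  have hlast_le : u (Fin.last n) ≤ 1 :=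
    (le_abs_self _).trans ((PiLp.norm_apply_le u (Fin.last n)).trans_eq hu.1)
  have hl : 1 ≤ u (Fin.last n) / cos θ := (one_le_div hc).mpr hu.2
  have hl0 : 0 < u (Fin.last n) / cos θ := one_pos.trans_le hl
  have hslice : slicePt n θ ((u (Fin.last n) / cos θ)⁻¹ • horizPart n u) =
      (u (Fin.last n) / cos θ)⁻¹ • u := by
    conv_rhs => enter [2]; rw [← horizEmb_horizPart_add u]
    rw [slicePt, smul_add, _root_.map_smul, smul_smul, inv_div, div_mul_cancel₀ _ hlast.ne']
  refine ⟨_, (u (Fin.last n) / cos θ)⁻¹ • horizPart n u, hl, ?_, ?_, ?_⟩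
  · rw [div_eq_mul_inv]
    exact mul_le_of_le_one_left (inv_pos.mpr hc).le hlast_le
  · rw [← norm_slicePt_le_one_iff (sin_pos_of_mem_Ioo_zero hθ).le, hslice, norm_smul, hu.1, mul_one,
      norm_of_nonneg (inv_pos.mpr hl0).le]
    exact inv_le_one_of_one_le₀ hl
  · rw [hslice, smul_inv_smul₀ hl0.ne']

lemma exists_smul_slicePt_mem (hθ : θ ∈ Ioo 0 (π / 2)) {z : EuclideanSpace ℝ (Fin n)}
    (hz : ‖z‖ ≤ sin θ) :
    ∃ l, 1 ≤ l ∧ l ≤ (cos θ)⁻¹ ∧ l • slicePt n θ z ∈ sphCap n θ := by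
  have hc := cos_pos_of_mem_Ioo_zero hθ
  have hle := cos_le_norm_slicePt (θ := θ) z
  have hnorm : 0 < ‖slicePt n θ z‖ := hc.trans_le hle
  have hl : 1 ≤ ‖slicePt n θ z‖⁻¹ := (one_le_inv₀ hnorm).mpr
    ((norm_slicePt_le_one_iff (sin_pos_of_mem_Ioo_zero hθ).le).mpr hz)
  refine ⟨_, hl, inv_anti₀ hc hle, norm_smul_inv_norm (slicePt_ne_zero hc z), ?_⟩
  rw [PiLp.smul_apply, slicePt_last, smul_eq_mul]
  exact le_mul_of_one_le_left hc.le hl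

end CapGeometry

/-! ### Hessians of homogeneous extensions -/

lemma hessQ_eq_dotProduct {n : ℕ} (G : V n → ℝ) (x v w : V n) :
    hessQ n G x v w = v.ofLp ⬝ᵥ Matrix.mulVec (hessM n G x) w.ofLp := by
  have hsum (y : V n) : ∑ i, y i • EuclideanSpace.single i (1 : ℝ) = y := by
    simpa using (EuclideanSpace.basisFun (Fin (n + 1)) ℝ).sum_repr y
  calc hessQ n G x v w
      = ∑ i, v i * hessQ n G x (EuclideanSpace.single i 1) w := by
        conv_lhs => rw [← hsum v]
        simp only [hessQ, map_sum, map_smul, sum_apply, smul_apply, smul_eq_mul]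
    _ = ∑ i, v i * ∑ j, hessM n G x i j * w j := by
        refine Finset.sum_congr rfl fun i _ => ?_
        conv_lhs => rw [← hsum w]
        simp only [hessQ, hessM, map_sum, map_smul, smul_eq_mul, mul_comm (w _)]

lemma sigmaElem_eq_principalMinorSum {n k : ℕ} (hk : k ≤ n) (G : V n → ℝ) (u : V n) :
    sigmaElem n k G u = principalMinorSum k (hessM n G u) := by
  have := neg_one_pow_mul_charpoly_coeff (hessM n G u) (k := k) (by simp; omega)
  rwa [Fintype.card_fin] at this

namespace IsHomExt

variable {n : ℕ} {θ : ℝ} {s G : V n → ℝ}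

lemma of_le {r r' : ℕ∞} (h : IsHomExt n θ r s G) (hr : r' ≤ r) : IsHomExt n θ r' s G :=
  ⟨h.1.imp fun _ hU => ⟨hU.1, hU.2.1, hU.2.2.of_le (WithTop.coe_le_coe.mpr hr)⟩, h.2⟩

lemma map_smul {r : ℕ∞} (h : IsHomExt n θ r s G) {x : V n} (hx : x ∈ coneCap n θ) {l : ℝ}
    (hl : 0 < l) : G (l • x) = l * G x := by
  obtain ⟨a, ha, u, hu, rfl⟩ := hx
  rw [smul_smul, h.2.1 _ (mul_pos hl ha) u hu, h.2.1 a ha u hu, mul_assoc]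

lemma contDiffAt {r : ℕ∞} (h : IsHomExt n θ r s G) {x : V n} (hx : x ∈ coneCap n θ) :
    ContDiffAt ℝ r G x :=
  h.1.elim fun _ hU => hU.2.2.contDiffAt (hU.1.mem_nhds (hU.2.1 hx))

lemma differentiableAt (h : IsHomExt n θ 2 s G) {x : V n} (hx : x ∈ coneCap n θ) :
    DifferentiableAt ℝ G x :=
  (h.contDiffAt hx).differentiableAt (by norm_num)

lemma fderiv_apply_self (h : IsHomExt n θ 2 s G) {x : V n} (hx : x ∈ coneCap n θ) :
    fderiv ℝ G x x = G x :=
  fderiv_apply_self_of_homogeneous (h.differentiableAt hx) fun _ => h.map_smul hx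

lemma hessQ_self_self (h : IsHomExt n θ 2 s G) {x : V n} (hx : x ∈ coneCap n θ) :
    hessQ n G x x x = 0 :=
  fderiv_fderiv_apply_self_self_of_homogeneous
    (fun _ hl => h.differentiableAt (smul_mem_coneCap hx hl))
    (((h.contDiffAt hx).fderiv_right (m := 1) (by norm_num)).differentiableAt (by norm_num))
    fun _ => h.map_smul hx

lemma hessQ_comm (h : IsHomExt n θ 2 s G) {x : V n} (hx : x ∈ coneCap n θ) (v w : V n) :
    hessQ n G x v w = hessQ n G x w v :=
  (h.contDiffAt hx).isSymmSndFDerivAt (by simp) v w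

lemma hessQ_eq_mul_hessQ_smul (h : IsHomExt n θ 2 s G) {x : V n} (hx : coneCap n θ ∈ nhds x)
    {l : ℝ} (hl : 0 < l) (v w : V n) : hessQ n G x v w = l * hessQ n G (l • x) v w := by
  rw [hessQ, fderiv_fderiv_of_homogeneous hl.ne'
    (Filter.eventually_of_mem hx fun y hy => h.map_smul hy hl)]
  rfl

lemma posSemidef_hessM (h : IsHomExt n θ 2 s G) (hτ : TauNonneg n θ G) {u : V n}
    (hu : u ∈ sphCap n θ) : (hessM n G u).PosSemidef := by
  refine Matrix.PosSemidef.of_dotProduct_mulVec_nonneg ?_ fun x => ?_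
  · ext i j
    exact h.hessQ_comm (sphCap_subset_coneCap hu) _ _
  · simpa [hessQ_eq_dotProduct] using hτ u hu (WithLp.toLp 2 x)

lemma hessM_mulVec_self (h : IsHomExt n θ 2 s G) (hτ : TauNonneg n θ G) {u : V n}
    (hu : u ∈ sphCap n θ) : Matrix.mulVec (hessM n G u) u.ofLp = 0 := by
  rw [← (h.posSemidef_hessM hτ hu).dotProduct_mulVec_zero_iff, star_trivial,
    ← hessQ_eq_dotProduct]
  exact h.hessQ_self_self (sphCap_subset_coneCap hu)

lemma hessQ_sub_smul_self (h : IsHomExt n θ 2 s G) (hτ : TauNonneg n θ G) {u : V n}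
    (hu : u ∈ sphCap n θ) (v : V n) (a : ℝ) :
    hessQ n G u (v - a • u) (v - a • u) = hessQ n G u v v := by
  have hright : ∀ w, hessQ n G u w u = 0 := fun w => by
    rw [hessQ_eq_dotProduct, h.hessM_mulVec_self hτ hu, dotProduct_zero]
  have hleft : ∀ w, hessQ n G u u w = 0 := fun w => by
    rw [h.hessQ_comm (sphCap_subset_coneCap hu), hright]
  simp only [hessQ] at hleft hright ⊢
  simp only [map_sub, sub_apply, _root_.map_smul, smul_apply, hleft, hright, smul_zero, sub_zero]

lemma hessQ_pos_of_last_eq_zero (h : IsHomExt n θ 2 s G) (hτ : TauPos n θ G) {u : V n}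
    (hu : u ∈ sphCap n θ) (hlast : 0 < u (Fin.last n)) {v : V n} (hv : v ≠ 0)
    (hv_last : v (Fin.last n) = 0) : 0 < hessQ n G u v v := by
  have hperp : ⟪v - ⟪v, u⟫ • u, u⟫ = 0 := by
    rw [inner_sub_left, inner_smul_left, real_inner_self_eq_norm_sq, hu.1]
    simp
  have hne : v - ⟪v, u⟫ • u ≠ 0 := fun h0 => by
    have hcoord : ⟪v, u⟫ * u (Fin.last n) = 0 := by
      rw [← smul_eq_mul, ← PiLp.smul_apply, ← sub_eq_zero.mp h0, hv_last]
    rw [(mul_eq_zero_iff_right hlast.ne').mp hcoord, zero_smul, sub_zero] at h0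
    exact hv h0
  simpa only [h.hessQ_sub_smul_self hτ.1 hu] using hτ.2 u hu _ hne hperp

end IsHomExt

/-! ### The gnomonic potential -/

/-- The gnomonic restriction of `G`: its values on the horizontal hyperplane at height `cos θ`. For
a capillary function, `∂_{n+1} G = 0` and Euler's identity become the Robin condition. -/
def capPotential (n : ℕ) (θ : ℝ) (G : V n → ℝ) (z : EuclideanSpace ℝ (Fin n)) : ℝ :=
  G (slicePt n θ z)

namespace IsHomExt

variable {n k : ℕ} {θ : ℝ} {s G : V n → ℝ} {z : EuclideanSpace ℝ (Fin n)}

lemma contDiffAt_capPotential (h : IsHomExt n θ 2 s G) (hθ : θ ∈ Ioo 0 (π / 2))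
    (hz : ‖z‖ ≤ sin θ) : ContDiffAt ℝ 2 (capPotential n θ G) z :=
  (h.contDiffAt (slicePt_mem_coneCap hθ hz)).comp z contDiff_slicePt.contDiffAt

lemma fderiv_capPotential (h : IsHomExt n θ 2 s G) (hθ : θ ∈ Ioo 0 (π / 2)) (hz : ‖z‖ ≤ sin θ)
    (v : EuclideanSpace ℝ (Fin n)) :
    fderiv ℝ (capPotential n θ G) z v = fderiv ℝ G (slicePt n θ z) (horizEmb n v) :=
  DFunLike.congr_fun (fderiv_comp_add (L := (horizEmb n).toContinuousLinearMap)
    (h.differentiableAt (slicePt_mem_coneCap hθ hz))) v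

lemma fderiv_fderiv_capPotential (h : IsHomExt n θ 2 s G) (hθ : θ ∈ Ioo 0 (π / 2))
    (hz : ‖z‖ ≤ sin θ) (v w : EuclideanSpace ℝ (Fin n)) :
    fderiv ℝ (fderiv ℝ (capPotential n θ G)) z v w =
      hessQ n G (slicePt n θ z) (horizEmb n v) (horizEmb n w) :=
  fderiv_fderiv_comp_add (L := (horizEmb n).toContinuousLinearMap)
    (h.contDiffAt (slicePt_mem_coneCap hθ hz)) v w

lemma exists_hessian_capPotential_eq (h : IsHomExt n θ 2 s G) (hθ : θ ∈ Ioo 0 (π / 2))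
    (hz : ‖z‖ < sin θ) :
    ∃ l, ∃ u ∈ sphCap n θ, 1 ≤ l ∧ l ≤ (cos θ)⁻¹ ∧ ∀ v w : EuclideanSpace ℝ (Fin n),
      fderiv ℝ (fderiv ℝ (capPotential n θ G)) z v w =
        l * hessQ n G u (horizEmb n v) (horizEmb n w) := by
  obtain ⟨l, hl1, hl2, hl⟩ := exists_smul_slicePt_mem hθ hz.le
  refine ⟨l, _, hl, hl1, hl2, fun v w => ?_⟩
  rw [h.fderiv_fderiv_capPotential hθ hz.le]
  exact h.hessQ_eq_mul_hessQ_smul (coneCap_mem_nhds_slicePt hθ hz) (one_pos.trans_le hl1) _ _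

lemma isRobinPotential (h : IsHomExt n θ 2 s G) (hθ : θ ∈ Ioo 0 (π / 2))
    (hcap : IsCapillaryF n θ G) (hτ : TauPos n θ G) :
    IsRobinPotential (sin θ) (capPotential n θ G) where
  radius_pos := sin_pos_of_mem_Ioo_zero hθ
  contDiffAt z hz := h.contDiffAt_capPotential hθ hz
  hess_pos z hz v hv := by
    obtain ⟨l, u, hu, hl1, -, hl⟩ := h.exists_hessian_capPotential_eq hθ hz
    rw [hl]
    exact mul_pos (one_pos.trans_le hl1) (h.hessQ_pos_of_last_eq_zero hτ hu
      ((cos_pos_of_mem_Ioo_zero hθ).trans_le hu.2)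
      ((map_ne_zero_iff _ (horizEmb n).injective).mpr hv) (horizEmb_last v))
  robin z hz := by
    have hEuler := h.fderiv_apply_self (slicePt_mem_coneCap hθ hz.le)
    have hvert := hcap _ (slicePt_mem_sphCapBdry hz)
    rw [h.fderiv_capPotential hθ hz.le]
    calc fderiv ℝ G (slicePt n θ z) (horizEmb n z)
        = fderiv ℝ G (slicePt n θ z) (horizEmb n z + cos θ • Etop n) := by
          rw [map_add, _root_.map_smul, hvert, smul_zero, add_zero]
      _ = capPotential n θ G z := hEuler

lemma abs_gram_det_capPotential_le (h : IsHomExt n θ 2 s G) (hθ : θ ∈ Ioo 0 (π / 2))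
    (hτ : TauNonneg n θ G) (hk : k ≤ n) {M : ℝ} (hM : ∀ u ∈ sphCap n θ, sigmaElem n k G u ≤ M)
    {v : Fin k → EuclideanSpace ℝ (Fin n)} (hv : Orthonormal ℝ v) (hz : ‖z‖ < sin θ) :
    |(Matrix.of fun i j => fderiv ℝ (fderiv ℝ (capPotential n θ G)) z (v i) (v j)).det| ≤
      (cos θ)⁻¹ ^ k * M := by
  obtain ⟨l, u, hu, hl1, hl2, hl⟩ := h.exists_hessian_capPotential_eq hθ hz
  have hl0 : 0 < l := one_pos.trans_le hl1
  let A : Matrix (Fin k) (Fin k) ℝ := Matrix.of fun i j =>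
    (horizEmb n (v i)).ofLp ⬝ᵥ Matrix.mulVec (hessM n G u) (horizEmb n (v j)).ofLp
  have hgram : (Matrix.of fun i j =>
      fderiv ℝ (fderiv ℝ (capPotential n θ G)) z (v i) (v j)) = l • A := by
    ext i j
    rw [Matrix.of_apply, hl, hessQ_eq_dotProduct]
    rfl
  have hA0 : 0 ≤ A.det :=
    det_gram_nonneg (h.posSemidef_hessM hτ hu) fun i => horizEmb n (v i)
  have hAM : A.det ≤ M := calc
    A.det ≤ principalMinorSum (Fintype.card (Fin k)) (hessM n G u) :=
      det_gram_le_principalMinorSum (h.posSemidef_hessM hτ hu)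
        (hv.comp_linearIsometry (horizEmb n))
    _ ≤ M := by rw [Fintype.card_fin, ← sigmaElem_eq_principalMinorSum hk]; exact hM u hu
  rw [hgram, Matrix.det_smul, Fintype.card_fin, abs_of_nonneg (by positivity)]
  exact mul_le_mul (pow_le_pow_left₀ hl0.le hl2 k) hAM hA0 (pow_nonneg (hl0.le.trans hl2) k)

lemma sq_mul_sigmaElem_mul_pow_le_det (h : IsHomExt n θ 2 s G) (hτ : TauNonneg n θ G)
    (hk : k ≤ n) {u : V n} (hu : u ∈ sphCap n θ) {t : ℝ} (ht : 0 ≤ t) :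
    u (Fin.last n) ^ 2 * sigmaElem n k G u * t ^ (n - k) ≤
      ((hessM n G u).submatrix Fin.castSucc Fin.castSucc + t • 1).det := by
  have hunit : u.ofLp ⬝ᵥ u.ofLp = 1 := by
    have hinner := real_inner_self_eq_norm_sq u
    rwa [hu.1, one_pow, EuclideanSpace.inner_eq_star_dotProduct, star_trivial] at hinner
  have hblock := sq_mul_principalMinorSum_mul_pow_le_det hk (h.posSemidef_hessM hτ hu) hunit
    (h.hessM_mulVec_self hτ hu) (Fin.last n) ht
  rwa [Fin.succAbove_last, Matrix.submatrix_add, Pi.add_apply, Pi.add_apply,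
    Matrix.submatrix_smul, Pi.smul_apply, Pi.smul_apply,
    Matrix.submatrix_one _ (Fin.castSucc_injective n), ← sigmaElem_eq_principalMinorSum hk]
    at hblock

lemma le_det_fderiv_gradient_capPotential_add (h : IsHomExt n θ 2 s G) (hθ : θ ∈ Ioo 0 (π / 2))
    (hτ : TauNonneg n θ G) (hk : k ≤ n) {m : ℝ} (hm : 0 ≤ m)
    (hmG : ∀ u ∈ sphCap n θ, m ≤ sigmaElem n k G u) {ε : ℝ} (hε : 0 ≤ ε) (hz : ‖z‖ < sin θ) :
    cos θ ^ 2 * m * ε ^ (n - k) ≤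
      (fderiv ℝ (∇ (capPotential n θ G)) z + ε • .id ℝ (EuclideanSpace ℝ (Fin n))).det := by
  obtain ⟨l, u, hu, hl1, -, hl⟩ := h.exists_hessian_capPotential_eq hθ hz
  have hl0 : 0 < l := one_pos.trans_le hl1
  have hmatrix : (Matrix.of fun i j => fderiv ℝ (fderiv ℝ (capPotential n θ G)) z
      (EuclideanSpace.basisFun (Fin n) ℝ i) (EuclideanSpace.basisFun (Fin n) ℝ j)) + ε • 1 =
      l • ((hessM n G u).submatrix Fin.castSucc Fin.castSucc + (ε / l) • 1) := by
    rw [smul_add, smul_smul, mul_div_cancel₀ _ hl0.ne']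
    congr 1
    ext i j
    rw [Matrix.of_apply, hl, EuclideanSpace.basisFun_apply, EuclideanSpace.basisFun_apply,
      horizEmb_single, horizEmb_single]
    rfl
  have hcos : cos θ ^ 2 * m ≤ u (Fin.last n) ^ 2 * sigmaElem n k G u :=
    mul_le_mul (pow_le_pow_left₀ (cos_pos_of_mem_Ioo_zero hθ).le hu.2 2) (hmG u hu) hm
      (sq_nonneg _)
  have hdiff : DifferentiableAt ℝ (fderiv ℝ (capPotential n θ G)) z :=
    ((h.contDiffAt_capPotential hθ hz.le).fderiv_right (m := 1) (by norm_num)).differentiableAt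
      (by norm_num)
  have hpow : l ^ n = l ^ k * l ^ (n - k) := by rw [← pow_add, Nat.add_sub_of_le hk]
  rw [det_fderiv_gradient_add_smul_id (EuclideanSpace.basisFun (Fin n) ℝ) hdiff, hmatrix,
    Matrix.det_smul, Fintype.card_fin]
  calc cos θ ^ 2 * m * ε ^ (n - k)
      ≤ l ^ k * (u (Fin.last n) ^ 2 * sigmaElem n k G u * ε ^ (n - k)) :=
        (mul_le_mul_of_nonneg_right hcos (pow_nonneg hε _)).trans <|
          le_mul_of_one_le_left (mul_nonneg ((by positivity : 0 ≤ cos θ ^ 2 * m).trans hcos)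
            (pow_nonneg hε _)) (one_le_pow₀ hl1)
    _ = l ^ n * (u (Fin.last n) ^ 2 * sigmaElem n k G u * (ε / l) ^ (n - k)) := by
        rw [hpow, div_pow]
        field_simp
    _ ≤ l ^ n * _ := mul_le_mul_of_nonneg_left
        (h.sq_mul_sigmaElem_mul_pow_le_det hτ hk hu (div_nonneg hε hl0.le)) (by positivity)

end IsHomExt

/-! ### Vanishing horizontal moments -/

lemma measure_pos_eq_zero_of_lt_comp {α : Type*} [MeasurableSpace α]
    {μ : Measure α} {T : α → α} (hT : MeasurePreserving T μ μ) (hinv : Function.Involutive T)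
    {K : Set α} (hK : MeasurableSet K) (hTK : T ⁻¹' K = K) {s ℓ : α → ℝ}
    (hℓ : ∀ x, ℓ (T x) = -ℓ x) (hlt : ∀ x ∈ K, 0 < ℓ x → s x < s (T x))
    (hint : IntegrableOn (fun x => s x * ℓ x) K μ) (hzero : ∫ x in K, s x * ℓ x ∂μ = 0) :
    μ {x | x ∈ K ∧ 0 < ℓ x} = 0 := by
  have hemb : MeasurableEmbedding T :=
    (MeasurableEquiv.ofInvolutive T hinv hT.measurable).measurableEmbedding
  have hcomp : ∀ x, s (T x) * ℓ x = -(s (T x) * ℓ (T x)) := fun x => by rw [hℓ, mul_neg, neg_neg]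
  have hint' : IntegrableOn (fun x => s (T x) * ℓ x) K μ := by
    have hneg := ((hT.integrableOn_comp_preimage hemb).mpr hint).neg
    rw [hTK] at hneg
    exact hneg.congr_fun (fun x _ => (hcomp x).symm) hK
  have hzero' : ∫ x in K, s (T x) * ℓ x ∂μ = 0 := by
    have hpreimage := hT.setIntegral_preimage_emb hemb (fun x => s x * ℓ x) K
    rw [hTK, hzero] at hpreimage
    simp only [hcomp, integral_neg, hpreimage, neg_zero]
  have hnonneg : ∀ x ∈ K, 0 ≤ s (T x) * ℓ x - s x * ℓ x := fun x hx => by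
    rw [← sub_mul]
    rcases lt_trichotomy 0 (ℓ x) with hpos | hx0 | hneg
    · exact (mul_pos (sub_pos.mpr (hlt x hx hpos)) hpos).le
    · rw [← hx0, mul_zero]
    · have := hlt (T x) (hTK.ge hx) (by rw [hℓ]; exact neg_pos.mpr hneg)
      rw [hinv] at this
      exact mul_nonneg_of_nonpos_of_nonpos (sub_nonpos.mpr this.le) hneg.le
  have hdiff : ∫ x in K, s (T x) * ℓ x - s x * ℓ x ∂μ = 0 := by
    rw [integral_sub hint' hint, hzero, hzero', sub_zero]
  rw [setIntegral_eq_zero_iff_of_nonneg_ae ((ae_restrict_mem hK).mono hnonneg) (hint'.sub hint),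
    Filter.EventuallyEq, ae_restrict_iff' hK] at hdiff
  refine measure_mono_null (fun x hx => ?_) hdiff
  intro hx0
  exact (mul_lt_mul_of_pos_right (hlt x hx.1 hx.2) hx.2).ne' (sub_eq_zero.mp (hx0 hx.1))

lemma reflection_orthogonal_singleton_apply {E : Type*} [NormedAddCommGroup E]
    [InnerProductSpace ℝ E] (y z : E) :
    (ℝ ∙ y)ᗮ.reflection z = z - (2 * (⟪y, z⟫ / ‖y‖ ^ 2)) • y := by
  rw [Submodule.reflection_orthogonal_apply, Submodule.reflection_singleton_apply, neg_sub,
    ← Nat.cast_smul_eq_nsmul ℝ, smul_smul]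
  rfl

lemma IsRobinPotential.lt_reflection {E : Type*} [NormedAddCommGroup E] [InnerProductSpace ℝ E]
    {R : ℝ} {f : E → ℝ} (hf : IsRobinPotential R f) {y z : E} (hy : ‖y‖ = R) (hfy : f y ≤ 0)
    (hz : ‖z‖ ≤ R) (hyz : 0 < ⟪y, z⟫) : f z < f ((ℝ ∙ y)ᗮ.reflection z) := by
  have hy0 : y ≠ 0 := fun h0 => hyz.ne' (by rw [h0, inner_zero_left])
  have : Nontrivial E := nontrivial_of_ne y 0 hy0
  have hc : 0 < 2 * (⟪y, z⟫ / ‖y‖ ^ 2) := by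
    have := hy.symm ▸ hf.radius_pos
    positivity
  have hdiff : (ℝ ∙ y)ᗮ.reflection z - z = -((2 * (⟪y, z⟫ / ‖y‖ ^ 2)) • y) := by
    rw [reflection_orthogonal_singleton_apply, sub_sub_cancel_left]
  have hne : z ≠ (ℝ ∙ y)ᗮ.reflection z := fun h => by
    rw [← h, sub_self, zero_eq_neg, smul_eq_zero_iff_right hc.ne'] at hdiff
    exact hy0 hdiff
  have hfderiv : fderiv ℝ f z y ≤ 0 := (hf.fderiv_le_of_norm_le hz hy).trans hfy
  calc f z ≤ f z + fderiv ℝ f z ((ℝ ∙ y)ᗮ.reflection z - z) := by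
        rw [hdiff, map_neg, map_smul]
        exact le_add_of_nonneg_right (neg_nonneg.mpr (mul_nonpos_of_nonneg_of_nonpos hc.le hfderiv))
    _ < f ((ℝ ∙ y)ᗮ.reflection z) :=
        hf.add_fderiv_sub_lt hz (by rwa [LinearIsometryEquiv.norm_map]) hne

section CapReflection

variable {n : ℕ} {θ : ℝ}

/-- The reflection of `ℝⁿ⁺¹` in the vertical hyperplane orthogonal to the horizontal vector `y`. -/
def horizReflection (n : ℕ) (y : EuclideanSpace ℝ (Fin n)) : V n ≃ₗᵢ[ℝ] V n :=
  (ℝ ∙ horizEmb n y)ᗮ.reflection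

variable (y : EuclideanSpace ℝ (Fin n))

lemma horizReflection_apply (x : V n) :
    horizReflection n y x = x - (2 * (⟪horizEmb n y, x⟫ / ‖y‖ ^ 2)) • horizEmb n y := by
  rw [horizReflection, reflection_orthogonal_singleton_apply, LinearIsometry.norm_map]

lemma horizReflection_involutive : Function.Involutive (horizReflection n y) :=
  Submodule.reflection_reflection _

lemma inner_horizEmb_horizReflection (x : V n) :
    ⟪horizEmb n y, horizReflection n y x⟫ = -⟪horizEmb n y, x⟫ := by
  rw [← LinearIsometryEquiv.inner_map_map (horizReflection n y), horizReflection_involutive,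
    horizReflection, Submodule.reflection_orthogonalComplement_singleton_eq_neg, inner_neg_left]

lemma horizReflection_Etop : horizReflection n y (Etop n) = Etop n := by
  rw [horizReflection_apply, inner_horizEmb_Etop, zero_div, mul_zero, zero_smul, sub_zero]

lemma horizReflection_last (x : V n) : horizReflection n y x (Fin.last n) = x (Fin.last n) := by
  simp [horizReflection_apply]

lemma horizReflection_add_smul_Etop (x : V n) (a : ℝ) :
    horizReflection n y (x + a • Etop n) = horizReflection n y x + a • Etop n := by
  rw [map_add, map_smul, horizReflection_Etop]

lemma horizReflection_slicePt (z : EuclideanSpace ℝ (Fin n)) :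
    horizReflection n y (slicePt n θ z) = slicePt n θ ((ℝ ∙ y)ᗮ.reflection z) := by
  rw [slicePt, horizReflection_add_smul_Etop, slicePt, horizReflection_apply,
    LinearIsometry.inner_map_map, reflection_orthogonal_singleton_apply, map_sub, map_smul]

lemma preimage_horizReflection_capCap :
    horizReflection n y ⁻¹' capCap n θ = capCap n θ := by
  ext ζ
  simp only [capCap, mem_preimage, mem_ofPred_eq, horizReflection_last,
    ← horizReflection_add_smul_Etop, LinearIsometryEquiv.norm_map]

end CapReflection

section CapMeasure

variable {n : ℕ} {θ : ℝ}

lemma lipschitzWith_horizPart : LipschitzWith 1 (horizPart n) := by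
  refine LipschitzWith.of_dist_le_mul fun x y => ?_
  rw [NNReal.coe_one, one_mul, dist_eq_norm, dist_eq_norm,
    show horizPart n x - horizPart n y = horizPart n (x - y) from rfl]
  refine le_of_sq_le_sq ?_ (norm_nonneg _)
  conv_rhs => rw [← horizEmb_horizPart_add (x - y), norm_sq_horizEmb_add]
  exact le_add_of_nonneg_right (sq_nonneg _)

lemma capCap_subset_image_closedBall (hθ : θ ∈ Ioo 0 (π / 2)) :
    capCap n θ ⊆ (fun z => ‖slicePt n θ z‖⁻¹ • slicePt n θ z - cos θ • Etop n) ''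
      Metric.closedBall 0 (sin θ) := by
  intro ζ hζ
  obtain ⟨l, z, hl1, -, hz, hlz⟩ := exists_eq_smul_slicePt hθ (add_smul_Etop_mem_sphCap hζ)
  have hl : l * ‖slicePt n θ z‖ = 1 := by
    rw [← hζ.2, hlz, norm_smul, norm_of_nonneg (one_pos.trans_le hl1).le]
  refine ⟨z, mem_closedBall_zero_iff.mpr hz, ?_⟩
  simp only [← eq_inv_of_mul_eq_one_left hl, ← hlz, add_sub_cancel_right]

lemma hausdorffMeasure_capCap_lt_top (hθ : θ ∈ Ioo 0 (π / 2)) :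
    μH[(n : ℝ)] (capCap n θ) < ⊤ := by
  have hsmooth : ContDiff ℝ 1 fun z =>
      ‖slicePt n θ z‖⁻¹ • slicePt n θ z - cos θ • Etop n :=
    (((contDiff_slicePt.norm ℝ (slicePt_ne_zero (cos_pos_of_mem_Ioo_zero hθ))).inv
      fun z => norm_ne_zero_iff.mpr (slicePt_ne_zero (cos_pos_of_mem_Ioo_zero hθ) z)).smul
        contDiff_slicePt).sub contDiff_const
  have hcpt := isCompact_closedBall (0 : EuclideanSpace ℝ (Fin n)) (sin θ)
  obtain ⟨L, hL⟩ := hsmooth.contDiffOn.exists_lipschitzOnWith one_ne_zero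
    (convex_closedBall 0 (sin θ)) hcpt
  calc μH[(n : ℝ)] (capCap n θ)
      ≤ μH[(n : ℝ)] ((fun z => ‖slicePt n θ z‖⁻¹ • slicePt n θ z - cos θ • Etop n) ''
          Metric.closedBall 0 (sin θ)) := measure_mono (capCap_subset_image_closedBall hθ)
    _ ≤ (L : ENNReal) ^ (n : ℝ) * μH[(n : ℝ)] (Metric.closedBall 0 (sin θ)) :=
        hL.hausdorffMeasure_image_le n.cast_nonneg
    _ < ⊤ := ENNReal.mul_lt_top
        (ENNReal.rpow_lt_top_of_nonneg n.cast_nonneg ENNReal.coe_ne_top) hcpt.measure_lt_top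

lemma ball_inter_halfSpace_subset_image_horizPart
    (y : EuclideanSpace ℝ (Fin n)) :
    {z | ‖z‖ < sin θ ∧ 0 < ⟪y, z⟫} ⊆
      horizPart n '' {ζ | ζ ∈ capCap n θ ∧ 0 < ⟪horizEmb n y, ζ⟫} := by
  rintro z ⟨hz, hyz⟩
  have hsq : ‖z‖ ^ 2 ≤ sin θ ^ 2 := pow_le_pow_left₀ (norm_nonneg z) hz.le 2
  have hcos : cos θ ^ 2 ≤ 1 - ‖z‖ ^ 2 := by linarith [sin_sq_add_cos_sq θ]
  have hsphere : horizEmb n z + √(1 - ‖z‖ ^ 2) • Etop n ∈ sphCap n θ := by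
    refine ⟨(pow_eq_one_iff_of_nonneg (norm_nonneg _) two_ne_zero).mp ?_, ?_⟩
    · rw [norm_sq_horizEmb_add, sq_sqrt ((sq_nonneg _).trans hcos), add_sub_cancel]
    · simpa using le_sqrt_of_sq_le hcos
  refine ⟨_, ⟨sub_smul_Etop_mem_capCap hsphere, ?_⟩, ?_⟩
  · rwa [sub_eq_add_neg, ← neg_smul, inner_horizEmb_add_smul_Etop, inner_horizEmb_add_smul_Etop,
      LinearIsometry.inner_map_map]
  · ext i
    simp [horizPart, Etop]

lemma hausdorffMeasure_halfCap_pos (hθ : θ ∈ Ioo 0 (π / 2)) {y : EuclideanSpace ℝ (Fin n)}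
    (hy : y ≠ 0) : 0 < μH[(n : ℝ)] {ζ | ζ ∈ capCap n θ ∧ 0 < ⟪horizEmb n y, ζ⟫} := by
  have hs := sin_pos_of_mem_Ioo_zero hθ
  have hopen : IsOpen {z : EuclideanSpace ℝ (Fin n) | ‖z‖ < sin θ ∧ 0 < ⟪y, z⟫} :=
    (isOpen_lt (f := fun z => ‖z‖) (g := fun _ => sin θ) (by fun_prop) (by fun_prop)).inter
      (isOpen_lt (f := fun _ => 0) (g := fun z => ⟪y, z⟫) (by fun_prop) (by fun_prop))
  have hnonempty : {z : EuclideanSpace ℝ (Fin n) | ‖z‖ < sin θ ∧ 0 < ⟪y, z⟫}.Nonempty := by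
    have hny : 0 < ‖y‖ := norm_pos_iff.mpr hy
    refine ⟨(sin θ / 2 / ‖y‖) • y, ?_, ?_⟩
    · rw [norm_smul, norm_of_nonneg (by positivity), div_mul_cancel₀ _ hny.ne']
      exact half_lt_self hs
    · rw [inner_smul_right, real_inner_self_eq_norm_sq]
      positivity
  calc 0 < μH[(n : ℝ)] {z : EuclideanSpace ℝ (Fin n) | ‖z‖ < sin θ ∧ 0 < ⟪y, z⟫} :=
        hopen.measure_pos _ hnonempty
    _ ≤ μH[(n : ℝ)] (horizPart n '' {ζ | ζ ∈ capCap n θ ∧ 0 < ⟪horizEmb n y, ζ⟫}) :=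
        measure_mono (ball_inter_halfSpace_subset_image_horizPart y)
    _ ≤ μH[(n : ℝ)] {ζ | ζ ∈ capCap n θ ∧ 0 < ⟪horizEmb n y, ζ⟫} := by
        simpa using lipschitzWith_horizPart.hausdorffMeasure_image_le n.cast_nonneg
          {ζ | ζ ∈ capCap n θ ∧ 0 < ⟪horizEmb n y, ζ⟫}

lemma integrableOn_capCap (hθ : θ ∈ Ioo 0 (π / 2)) {g : V n → ℝ}
    (hg : ContinuousOn g (capCap n θ)) : IntegrableOn g (capCap n θ) μH[(n : ℝ)] := by
  have hmeas := (isClosed_capCap (n := n) (θ := θ)).measurableSet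
  have : IsFiniteMeasure ((μH[(n : ℝ)]).restrict (capCap n θ)) :=
    isFiniteMeasure_restrict.mpr (hausdorffMeasure_capCap_lt_top hθ).ne
  have hint := hg.integrableOn_compact' (μ := (μH[(n : ℝ)]).restrict (capCap n θ))
    isCompact_capCap hmeas
  rwa [IntegrableOn, Measure.restrict_restrict hmeas, inter_self] at hint

lemma inner_horizEmb (y : EuclideanSpace ℝ (Fin n)) (ζ : V n) :
    ⟪horizEmb n y, ζ⟫ = ∑ i : Fin n, y i * ζ i.castSucc := by
  simp [PiLp.inner_apply, Fin.sum_univ_castSucc, mul_comm]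

lemma integral_mul_inner_horizEmb_eq_zero (hθ : θ ∈ Ioo 0 (π / 2)) {s : V n → ℝ}
    (hs : ContinuousOn s (capCap n θ))
    (hmoment : ∀ i : Fin (n + 1), i ≠ Fin.last n →
      ∫ ζ in capCap n θ, s ζ * ζ i ∂μH[(n : ℝ)] = 0) (y : EuclideanSpace ℝ (Fin n)) :
    ∫ ζ in capCap n θ, s ζ * ⟪horizEmb n y, ζ⟫ ∂μH[(n : ℝ)] = 0 := by
  simp only [inner_horizEmb, Finset.mul_sum, mul_left_comm (s _)]
  have hint : ∀ i : Fin n, IntegrableOn (fun ζ => y i * (s ζ * ζ i.castSucc)) (capCap n θ)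
      μH[(n : ℝ)] := fun i => (integrableOn_capCap hθ (hs.mul (by fun_prop))).const_mul (y i)
  rw [integral_finsetSum _ fun i _ => hint i]
  refine Finset.sum_eq_zero fun i _ => ?_
  rw [integral_const_mul, hmoment _ (Fin.castSucc_lt_last i).ne, mul_zero]

end CapMeasure

namespace IsHomExt

variable {n : ℕ} {θ : ℝ} {s G : V n → ℝ}

lemma continuousOn (h : IsHomExt n θ 2 s G) : ContinuousOn s (capCap n θ) := by
  have hG : ContinuousOn (fun ζ => G (ζ + cos θ • Etop n)) (capCap n θ) := fun ζ hζ =>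
    ((h.differentiableAt
      (sphCap_subset_coneCap (add_smul_Etop_mem_sphCap hζ))).continuousAt.comp
      (f := fun ζ => ζ + cos θ • Etop n) (by fun_prop)).continuousWithinAt
  exact hG.congr fun ζ hζ => (h.2.2 ζ hζ).symm

lemma exists_eq_mul_capPotential (h : IsHomExt n θ 2 s G) (hθ : θ ∈ Ioo 0 (π / 2)) {ζ : V n}
    (hζ : ζ ∈ capCap n θ) :
    ∃ l z, 1 ≤ l ∧ l ≤ (cos θ)⁻¹ ∧ ‖z‖ ≤ sin θ ∧ ζ + cos θ • Etop n = l • slicePt n θ z ∧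
      s ζ = l * capPotential n θ G z ∧ ∀ w, ⟪horizEmb n w, ζ⟫ = l * ⟪w, z⟫ := by
  obtain ⟨l, z, hl1, hl2, hz, hlz⟩ := exists_eq_smul_slicePt hθ (add_smul_Etop_mem_sphCap hζ)
  refine ⟨l, z, hl1, hl2, hz, hlz, ?_, fun w => ?_⟩
  · rw [← h.2.2 ζ hζ, hlz, h.map_smul (slicePt_mem_coneCap hθ hz) (one_pos.trans_le hl1),
      capPotential]
  · rw [← inner_horizEmb_add_smul_Etop w ζ (cos θ), hlz, inner_smul_right, slicePt,
      inner_horizEmb_add_smul_Etop, LinearIsometry.inner_map_map]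

lemma lt_horizReflection (h : IsHomExt n θ 2 s G) (hθ : θ ∈ Ioo 0 (π / 2))
    (hcap : IsCapillaryF n θ G) (hτ : TauPos n θ G) {y : EuclideanSpace ℝ (Fin n)}
    (hy : ‖y‖ = sin θ) (hGy : capPotential n θ G y ≤ 0) {ζ : V n} (hζ : ζ ∈ capCap n θ)
    (hyζ : 0 < ⟪horizEmb n y, ζ⟫) : s ζ < s (horizReflection n y ζ) := by
  obtain ⟨l, z, hl1, -, hz, hlz, hs, hinner⟩ := h.exists_eq_mul_capPotential hθ hζ
  have hl0 : 0 < l := one_pos.trans_le hl1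
  have hz' : ‖(ℝ ∙ y)ᗮ.reflection z‖ ≤ sin θ := by rwa [LinearIsometryEquiv.norm_map]
  have hζ' : horizReflection n y ζ ∈ capCap n θ := (preimage_horizReflection_capCap y).ge hζ
  have hs' : s (horizReflection n y ζ) = l * capPotential n θ G ((ℝ ∙ y)ᗮ.reflection z) := by
    rw [← h.2.2 _ hζ', ← horizReflection_add_smul_Etop, hlz, _root_.map_smul,
      horizReflection_slicePt, h.map_smul (slicePt_mem_coneCap hθ hz') hl0, capPotential]
  rw [hs, hs']
  rw [hinner] at hyζ
  exact mul_lt_mul_of_pos_left ((h.isRobinPotential hθ hcap hτ).lt_reflection hy hGy hz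
    (pos_of_mul_pos_right hyζ hl0.le)) hl0

lemma capPotential_pos_of_norm_eq (h : IsHomExt n θ 2 s G) (hθ : θ ∈ Ioo 0 (π / 2))
    (hcap : IsCapillaryF n θ G) (hτ : TauPos n θ G)
    (hmoment : ∀ i : Fin (n + 1), i ≠ Fin.last n →
      ∫ ζ in capCap n θ, s ζ * ζ i ∂μH[(n : ℝ)] = 0)
    {y : EuclideanSpace ℝ (Fin n)} (hy : ‖y‖ = sin θ) : 0 < capPotential n θ G y := by
  by_contra! hGy
  have hy0 : y ≠ 0 := norm_ne_zero_iff.mp (hy.trans_ne (sin_pos_of_mem_Ioo_zero hθ).ne')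
  refine (hausdorffMeasure_halfCap_pos hθ hy0).ne' ?_
  exact measure_pos_eq_zero_of_lt_comp
    ((horizReflection n y).toIsometryEquiv.measurePreserving_hausdorffMeasure _)
    (horizReflection_involutive y) isClosed_capCap.measurableSet
    (preimage_horizReflection_capCap y) (inner_horizEmb_horizReflection y)
    (fun ζ hζ => h.lt_horizReflection hθ hcap hτ hy hGy hζ)
    (integrableOn_capCap hθ (h.continuousOn.mul (by fun_prop)))
    (integral_mul_inner_horizEmb_eq_zero hθ h.continuousOn hmoment y)

end IsHomExt

/-! ### The estimates -/

lemma exists_pos_forall_mem_Icc {X : Type*} [TopologicalSpace X] {K : Set X}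
    (hK : IsCompact K) (hne : K.Nonempty) {φ : X → ℝ} (hφ : ContinuousOn φ K)
    (hpos : ∀ x ∈ K, 0 < φ x) : ∃ m M, 0 < m ∧ ∀ x ∈ K, φ x ∈ Icc m M := by
  obtain ⟨a, ha, hmin⟩ := hK.exists_isMinOn hne hφ
  obtain ⟨b, -, hmax⟩ := hK.exists_isMaxOn hne hφ
  exact ⟨φ a, φ b, hpos a ha, fun x hx => ⟨hmin hx, hmax hx⟩⟩

section Estimates

variable {n k : ℕ} {θ m M : ℝ}

/-- A `C²` strictly convex capillary function `s` whose horizontal moments vanish and whose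
`σ_k(τ[s])` takes values in `[m, M]`; `G` is the 1-homogeneous extension of `s`. -/
structure IsCenteredPinched (n k : ℕ) (θ m M : ℝ) (s G : V n → ℝ) : Prop where
  isHomExt : IsHomExt n θ 2 s G
  isCapillaryF : IsCapillaryF n θ G
  tauPos : TauPos n θ G
  moment_eq_zero : ∀ i : Fin (n + 1), i ≠ Fin.last n →
    ∫ ζ in capCap n θ, s ζ * ζ i ∂μH[(n : ℝ)] = 0
  sigmaElem_mem : ∀ u ∈ sphCap n θ, sigmaElem n k G u ∈ Icc m M

namespace IsCenteredPinched

lemma of_sigmaElem_eq {φ s G : V n → ℝ} (hφ : ∀ ζ ∈ capCap n θ, φ ζ ∈ Icc m M)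
    (h : IsHomExt n θ 2 s G) (hcap : IsCapillaryF n θ G) (hτ : TauPos n θ G)
    (hmoment : ∀ i : Fin (n + 1), i ≠ Fin.last n →
      ∫ ζ in capCap n θ, s ζ * ζ i ∂μH[(n : ℝ)] = 0)
    (hσ : ∀ ζ ∈ capCap n θ, sigmaElem n k G (ζ + cos θ • Etop n) = φ ζ) :
    IsCenteredPinched n k θ m M s G :=
  ⟨h, hcap, hτ, hmoment, fun u hu => by
    have hmem := hφ _ (sub_smul_Etop_mem_capCap hu)
    rwa [← hσ _ (sub_smul_Etop_mem_capCap hu), sub_add_cancel] at hmem⟩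

lemma exists_capPotential_mem_Ioc (hθ : θ ∈ Ioo 0 (π / 2)) (hk : 1 ≤ k) (hkn : k ≤ n)
    (hm : 0 < m) :
    ∃ C, 0 < C ∧ ∀ s G, IsCenteredPinched n k θ m M s G →
      ∀ z, ‖z‖ ≤ sin θ → capPotential n θ G z ∈ Ioc 0 C := by
  have : NeZero k := ⟨Nat.one_le_iff_ne_zero.mp hk⟩
  have : NeZero n := ⟨Nat.one_le_iff_ne_zero.mp (hk.trans hkn)⟩
  have hc := cos_pos_of_mem_Ioo_zero hθ
  have hdim : Module.finrank ℝ (EuclideanSpace ℝ (Fin n)) = k + (n - k) := by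
    rw [finrank_euclideanSpace_fin, Nat.add_sub_of_le hkn]
  obtain ⟨C, hC, hbound⟩ := IsRobinPotential.exists_upper_bound hdim (sin_pos_of_mem_Ioo_zero hθ)
    (D := (cos θ)⁻¹ ^ k * |M|) (m := cos θ ^ 2 * m) (by positivity) (by positivity)
  refine ⟨C, hC, fun s G h z hz => ?_⟩
  have hrobin := h.isHomExt.isRobinPotential hθ h.isCapillaryF h.tauPos
  have hsphere : ∀ w, ‖w‖ = sin θ → 0 < capPotential n θ G w := fun w hw =>
    h.isHomExt.capPotential_pos_of_norm_eq hθ h.isCapillaryF h.tauPos h.moment_eq_zero hw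
  refine ⟨hrobin.pos_of_sphere_pos hsphere hz, hbound _ hrobin hsphere (fun v hv x hx => ?_)
    (fun ε hε x hx => ?_) z hz⟩
  · exact h.isHomExt.abs_gram_det_capPotential_le hθ h.tauPos.1 hkn
      (fun u hu => (h.sigmaElem_mem u hu).2.trans (le_abs_self M)) hv hx
  · exact h.isHomExt.le_det_fderiv_gradient_capPotential_add hθ h.tauPos.1 hkn hm.le
      (fun u hu => (h.sigmaElem_mem u hu).1) hε.le hx

lemma exists_mem_Ioc (hθ : θ ∈ Ioo 0 (π / 2)) (hk : 1 ≤ k) (hkn : k ≤ n) (hm : 0 < m) :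
    ∃ C, 0 < C ∧ ∀ s G, IsCenteredPinched n k θ m M s G → ∀ ζ ∈ capCap n θ, s ζ ∈ Ioc 0 C := by
  have hc := cos_pos_of_mem_Ioo_zero hθ
  obtain ⟨C, hC, hbound⟩ := exists_capPotential_mem_Ioc (M := M) hθ hk hkn hm
  refine ⟨(cos θ)⁻¹ * C, by positivity, fun s G h ζ hζ => ?_⟩
  obtain ⟨l, z, hl1, hl2, hz, -, hs, -⟩ := h.isHomExt.exists_eq_mul_capPotential hθ hζ
  obtain ⟨hpos, hle⟩ := hbound s G h z hz
  rw [hs]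
  exact ⟨mul_pos (one_pos.trans_le hl1) hpos, mul_le_mul hl2 hle hpos.le (by positivity)⟩

lemma exists_capPotential_sub_inner_mem_Icc (hθ : θ ∈ Ioo 0 (π / 2)) (hn : 1 ≤ n)
    (hm : 0 < m) :
    ∃ c C, 0 < c ∧ 0 < C ∧ ∀ s G, IsCenteredPinched n n θ m M s G →
      ∃ w, ∀ z, ‖z‖ ≤ sin θ → capPotential n θ G z - ⟪w, z⟫ ∈ Icc c C := by
  have : NeZero n := ⟨Nat.one_le_iff_ne_zero.mp hn⟩
  have hR := sin_pos_of_mem_Ioo_zero hθ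
  have hc := cos_pos_of_mem_Ioo_zero hθ
  obtain ⟨C, hC, hupper⟩ := exists_capPotential_mem_Ioc (M := M) hθ hn le_rfl hm
  obtain ⟨c, hc0, hlower⟩ := IsRobinPotential.exists_lower_bound
    (E := EuclideanSpace ℝ (Fin n)) (d := cos θ ^ 2 * m) hR hC (by positivity)
  refine ⟨c, C + C, hc0, by positivity, fun s G h => ?_⟩
  obtain ⟨w, hw, hcw⟩ := hlower _ (h.isHomExt.isRobinPotential hθ h.isCapillaryF h.tauPos)
    (fun z hz => (hupper s G h z hz).2) fun z hz => by
      have hdet := h.isHomExt.le_det_fderiv_gradient_capPotential_add hθ h.tauPos.1 le_rfl hm.le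
        (fun u hu => (h.sigmaElem_mem u hu).1) le_rfl hz
      rwa [zero_smul ℝ (.id ℝ (EuclideanSpace ℝ (Fin n)) : _ →L[ℝ] _), add_zero,
        Nat.sub_self, pow_zero, mul_one] at hdet
  refine ⟨w, fun z hz => ⟨hcw z hz, ?_⟩⟩
  rw [sub_eq_add_neg]
  exact add_le_add (hupper s G h z hz).2 (neg_inner_le_of_norm_le_div hR hw hz)

lemma exists_sub_inner_mem_Icc (hθ : θ ∈ Ioo 0 (π / 2)) (hn : 1 ≤ n) (hm : 0 < m) :
    ∃ c C, 0 < c ∧ 0 < C ∧ ∀ s G, IsCenteredPinched n n θ m M s G →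
      ∃ w : V n, w (Fin.last n) = 0 ∧ ∀ ζ ∈ capCap n θ, s ζ - ⟪ζ, w⟫ ∈ Icc c C := by
  have hcos := cos_pos_of_mem_Ioo_zero hθ
  obtain ⟨c, C, hc, hC, hbound⟩ := exists_capPotential_sub_inner_mem_Icc (M := M) hθ hn hm
  refine ⟨c, (cos θ)⁻¹ * C, hc, by positivity, fun s G h => ?_⟩
  obtain ⟨w, hw⟩ := hbound s G h
  refine ⟨horizEmb n w, horizEmb_last w, fun ζ hζ => ?_⟩
  obtain ⟨l, z, hl1, hl2, hz, -, hs, hinner⟩ := h.isHomExt.exists_eq_mul_capPotential hθ hζ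
  obtain ⟨hlow, hupp⟩ := hw z hz
  have hpos := hc.le.trans hlow
  rw [hs, real_inner_comm, hinner, ← mul_sub]
  exact ⟨hlow.trans (le_mul_of_one_le_left hpos hl1), mul_le_mul hl2 hupp hpos (by positivity)⟩

end IsCenteredPinched

end Estimates

theorem capillary_C0_estimate_general {n k : ℕ} {θ : ℝ} (hθ : θ ∈ Ioo 0 (π / 2)) (hk : 1 ≤ k)
    (hkn : k ≤ n) {m M : ℝ} (hm : 0 < m) {φ : V n → ℝ} (hφ : ∀ ζ ∈ capCap n θ, φ ζ ∈ Icc m M)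
    {r : ℕ∞} (hr : 2 ≤ r) :
    (∃ C : ℝ, 0 < C ∧
      ∀ s G : V n → ℝ, IsHomExt n θ r s G → IsCapillaryF n θ G → TauPos n θ G →
        (∀ i : Fin (n + 1), i ≠ Fin.last n →
          ∫ ζ in capCap n θ, s ζ * ζ i ∂μH[(n : ℝ)] = 0) →
        (∀ ζ ∈ capCap n θ, sigmaElem n k G (ζ + cos θ • Etop n) = φ ζ) →
        ∀ ζ ∈ capCap n θ, 0 < s ζ ∧ s ζ ≤ C) ∧
    (k = n → ∃ c C' : ℝ, 0 < c ∧ 0 < C' ∧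
      ∀ s G : V n → ℝ, IsHomExt n θ r s G → IsCapillaryF n θ G → TauPos n θ G →
        (∀ i : Fin (n + 1), i ≠ Fin.last n →
          ∫ ζ in capCap n θ, s ζ * ζ i ∂μH[(n : ℝ)] = 0) →
        (∀ ζ ∈ capCap n θ, sigmaElem n k G (ζ + cos θ • Etop n) = φ ζ) →
        ∃ w : V n, w (Fin.last n) = 0 ∧
          ∀ ζ ∈ capCap n θ, c ≤ s ζ - ⟪ζ, w⟫ ∧ s ζ - ⟪ζ, w⟫ ≤ C') := by
  constructor
  · obtain ⟨C, hC, hupper⟩ := IsCenteredPinched.exists_mem_Ioc (M := M) hθ hk hkn hm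
    exact ⟨C, hC, fun s G h hcap hτ hmoment hσ =>
      hupper s G (.of_sigmaElem_eq hφ (h.of_le hr) hcap hτ hmoment hσ)⟩
  · rintro rfl
    obtain ⟨c, C', hc, hC', hbounds⟩ :=
      IsCenteredPinched.exists_sub_inner_mem_Icc (M := M) hθ hk hm
    exact ⟨c, C', hc, hC', fun s G h hcap hτ hmoment hσ =>
      hbounds s G (.of_sigmaElem_eq hφ (h.of_le hr) hcap hτ hmoment hσ)⟩

/-- `C⁰` estimates for solutions of the capillary `σ_k` problem. -/
theorem capillary_C0_estimate (n k : ℕ) (hn : 1 ≤ n) (θ : ℝ) (hθ : θ ∈ Ioo 0 (π / 2))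
    (hk : 1 ≤ k) (hkn : k ≤ n)
    (φ : V n → ℝ) (hφc : ContinuousOn φ (capCap n θ))
    (hφpos : ∀ ζ ∈ capCap n θ, 0 < φ ζ) :
    (∃ C : ℝ, 0 < C ∧
      ∀ s G : V n → ℝ, IsHomExt n θ ⊤ s G → IsCapillaryF n θ G → TauPos n θ G →
        (∀ i : Fin (n + 1), i ≠ Fin.last n →
          ∫ ζ in capCap n θ, s ζ * ζ i ∂μH[(n : ℝ)] = 0) →
        (∀ ζ ∈ capCap n θ, sigmaElem n k G (ζ + Real.cos θ • Etop n) = φ ζ) →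
        ∀ ζ ∈ capCap n θ, 0 < s ζ ∧ s ζ ≤ C) ∧
    (k = n → ∃ c C' : ℝ, 0 < c ∧ 0 < C' ∧
      ∀ s G : V n → ℝ, IsHomExt n θ ⊤ s G → IsCapillaryF n θ G → TauPos n θ G →
        (∀ i : Fin (n + 1), i ≠ Fin.last n →
          ∫ ζ in capCap n θ, s ζ * ζ i ∂μH[(n : ℝ)] = 0) →
        (∀ ζ ∈ capCap n θ, sigmaElem n k G (ζ + Real.cos θ • Etop n) = φ ζ) →
        ∃ w : V n, w (Fin.last n) = 0 ∧
          ∀ ζ ∈ capCap n θ, c ≤ s ζ - ⟪ζ, w⟫ ∧ s ζ - ⟪ζ, w⟫ ≤ C') := by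
  obtain ⟨m, M, hm, hφ⟩ := exists_pos_forall_mem_Icc isCompact_capCap capCap_nonempty hφc hφpos
  exact capillary_C0_estimate_general hθ hk hkn hm hφ le_top
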